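/- (Theorem 24) Let 0 < θ₀ < θ₁ < 1, 0 < q₀, r, r₁, r₀ ≤ ∞, a, a₀, b₀, b₁ ∈ SV, and ‖s^{-1/r₀} b₀(s)/a₀(s)‖_{r₀,(0,1)} < ∞. Put c₀(t) = a₀(t) ‖s^{-1/r₀} b₀(s)/a₀(s)‖_{r₀,(0,t)} and ρ(t) = t^{θ₁-θ₀} c₀(t)/b₁(t). (i) If 0 < θ < 1 then (Ā^𝓡_{θ₀,r₀,b₀,q₀,a₀}, Ā_{θ₁,r₁;b₁})_{θ,r;a} ≅ Ā_{η,r;a^#}, where η = (1-θ)θ₀ + θθ₁ and a^#(t) = c₀(t)^{1-θ} b₁(t)^θ a(ρ(t)). (ii) If additionally ‖s^{-1/r} a(s)‖_{r,(0,1)} < ∞, then (Ā^𝓡_{θ₀,r₀,b₀,q₀,a₀}, Ā_{θ₁,r₁;b₁})_{1,r;a} ≅ Ā^𝓡_{θ₁,r,a^#,r₁,b₁}, where a^#(t) = b₁(t) a(ρ(t)). -/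

import Mathlib

open MeasureTheory Set ENNReal Filter

noncomputable section

/-- The `L_q` quasi-norm (with respect to Lebesgue measure) of an `ℝ≥0∞`-valued
function over a set of reals; for `q = ∞` it is the essential supremum. -/
def LqNorm (q : ℝ≥0∞) (s : Set ℝ) (g : ℝ → ℝ≥0∞) : ℝ≥0∞ :=
  if q = ∞ then essSup g (volume.restrict s)
  else (∫⁻ t in s, g t ^ q.toReal) ^ q⁻¹.toReal

/-- The weight `s ↦ s ^ (-1/r) * b s`, as an `ℝ≥0∞`-valued function
(`1/∞ = 0` by convention). -/
def svWgt (r : ℝ≥0∞) (b : ℝ → ℝ) : ℝ → ℝ≥0∞ :=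
  fun s => ENNReal.ofReal (s ^ (-(r⁻¹.toReal)) * b s)

/-- `f` and `g` are equivalent on `s`: each is bounded by a constant multiple
of the other there. -/
def EquivOn (s : Set ℝ) (f g : ℝ → ℝ) : Prop :=
  ∃ C : ℝ, 0 < C ∧ ∀ t ∈ s, C⁻¹ * g t ≤ f t ∧ f t ≤ C * g t

/-- A positive measurable function `b` on `(0,∞)` is slowly varying if for every
`ε > 0`, `t ^ ε * b t` is equivalent to a non-decreasing function and
`t ^ (-ε) * b t` is equivalent to a non-increasing function. -/
def SlowlyVarying (b : ℝ → ℝ) : Prop :=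
  AEMeasurable b (volume.restrict (Ioi 0)) ∧ (∀ t ∈ Ioi (0:ℝ), 0 < b t) ∧
    ∀ ε : ℝ, 0 < ε →
      (∃ g : ℝ → ℝ, MonotoneOn g (Ioi 0) ∧ EquivOn (Ioi 0) (fun t => t ^ ε * b t) g) ∧
      (∃ g : ℝ → ℝ, AntitoneOn g (Ioi 0) ∧ EquivOn (Ioi 0) (fun t => t ^ (-ε) * b t) g)

/-- A quasi-Banach space continuously embedded into the ambient (Hausdorff) space `E`,
recorded via its extended-real-valued quasi-norm; the space itself is the set of
vectors of finite quasi-norm. -/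
structure QuasiBanach (E : Type*) [AddCommGroup E] [Module ℝ E] where
  N : E → ℝ≥0∞
  zero : N 0 = 0
  definite : ∀ x, N x = 0 → x = 0
  smul : ∀ (c : ℝ) (x : E), N (c • x) = ENNReal.ofReal |c| * N x
  quasi : ∃ C : ℝ≥0∞, 1 ≤ C ∧ C ≠ ∞ ∧ ∀ x y, N (x + y) ≤ C * (N x + N y)
  complete : ∀ f : ℕ → E,
    (∀ ε : ℝ≥0∞, 0 < ε → ∃ M : ℕ, ∀ m ≥ M, ∀ n ≥ M, N (f m - f n) < ε) →
    (∀ n, N (f n) ≠ ∞) →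
    ∃ g : E, N g ≠ ∞ ∧ Tendsto (fun n => N (f n - g)) atTop (nhds 0)

variable {E : Type*} [AddCommGroup E] [Module ℝ E]

/-- The Peetre K-functional of the couple whose quasi-norms are `N₀`, `N₁`. -/
def Kf (N₀ N₁ : E → ℝ≥0∞) (t : ℝ) (f : E) : ℝ≥0∞ :=
  ⨅ g : E, N₀ g + ENNReal.ofReal t * N₁ (f - g)

/-- The quasi-norm of the real interpolation space `Ā_{θ,q;b}`. -/
def normK (N₀ N₁ : E → ℝ≥0∞) (θ : ℝ) (q : ℝ≥0∞) (b : ℝ → ℝ) (f : E) : ℝ≥0∞ :=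
  LqNorm q (Ioi 0) fun u =>
    ENNReal.ofReal (u ^ (-θ - q⁻¹.toReal) * b u) * Kf N₀ N₁ u f

/-- The quasi-norm of the limiting interpolation space `Ā^𝓛_{σ,r,b,q,a}`. -/
def normL (N₀ N₁ : E → ℝ≥0∞) (σ : ℝ) (r q : ℝ≥0∞) (b a : ℝ → ℝ) (f : E) : ℝ≥0∞ :=
  LqNorm r (Ioi 0) fun t =>
    ENNReal.ofReal (t ^ (-(r⁻¹.toReal)) * (b t / a t)) *
      LqNorm q (Ioo 0 t) fun u =>
        ENNReal.ofReal (u ^ (-σ - q⁻¹.toReal) * a u) * Kf N₀ N₁ u f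

/-- The quasi-norm of the limiting interpolation space `Ā^𝓡_{σ,r,b,q,a}`. -/
def normR (N₀ N₁ : E → ℝ≥0∞) (σ : ℝ) (r q : ℝ≥0∞) (b a : ℝ → ℝ) (f : E) : ℝ≥0∞ :=
  LqNorm r (Ioi 0) fun t =>
    ENNReal.ofReal (t ^ (-(r⁻¹.toReal)) * (b t / a t)) *
      LqNorm q (Ioi t) fun u =>
        ENNReal.ofReal (u ^ (-σ - q⁻¹.toReal) * a u) * Kf N₀ N₁ u f

/-- Two (extended-real-valued) quasi-norms define the same space with
equivalent quasi-norms. -/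
def EquivNorms (nX nY : E → ℝ≥0∞) : Prop :=
  ∃ C : ℝ≥0∞, 0 < C ∧ C ≠ ∞ ∧ ∀ f : E, C⁻¹ * nY f ≤ nX f ∧ nX f ≤ C * nY f

/-- discrete `ℓ_q` quasi-norm over `ℤ` -/
def lq (q : ℝ≥0∞) (x : ℤ → ℝ≥0∞) : ℝ≥0∞ :=
  if q = ∞ then ⨆ k, x k else (∑' k, x k ^ q.toReal) ^ q⁻¹.toReal

def pw (x : ℝ) : ℝ := (2:ℝ) ^ x

lemma pw_pos (x : ℝ) : 0 < pw x := Real.rpow_pos_of_pos (by norm_num) x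
lemma pw_add (x y : ℝ) : pw (x + y) = pw x * pw y := Real.rpow_add (by norm_num) x y
lemma pw_sub (x y : ℝ) : pw (x - y) = pw x / pw y := Real.rpow_sub (by norm_num) x y
lemma pw_neg (x : ℝ) : pw (-x) = (pw x)⁻¹ := Real.rpow_neg (by norm_num) x
lemma pw_zero : pw 0 = 1 := Real.rpow_zero 2
lemma pw_one : pw 1 = 2 := Real.rpow_one 2
lemma pw_mono {x y : ℝ} (h : x ≤ y) : pw x ≤ pw y :=
  Real.rpow_le_rpow_of_exponent_le (by norm_num) h
lemma pw_lt {x y : ℝ} (h : x < y) : pw x < pw y :=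
  Real.rpow_lt_rpow_of_exponent_lt (by norm_num) h
lemma pw_lt_iff {x y : ℝ} : pw x < pw y ↔ x < y :=
  Real.rpow_lt_rpow_left_iff (by norm_num)
lemma pw_le_iff {x y : ℝ} : pw x ≤ pw y ↔ x ≤ y :=
  Real.rpow_le_rpow_left_iff (by norm_num)
lemma pw_rpow (x s : ℝ) : pw x ^ s = pw (x * s) := (Real.rpow_mul (by norm_num) x s).symm
lemma pw_logb {x : ℝ} (hx : 0 < x) : pw (Real.logb 2 x) = x :=
  Real.rpow_logb (by norm_num) (by norm_num) hx

lemma toReal_pos' {q : ℝ≥0∞} (hq : 0 < q) (h : q ≠ ∞) : 0 < q.toReal := ENNReal.toReal_pos hq.ne' h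

lemma inv_toReal' (q : ℝ≥0∞) : q⁻¹.toReal = (q.toReal)⁻¹ := ENNReal.toReal_inv q

lemma rpow_rpow_inv' {q : ℝ≥0∞} (hq : 0 < q) (h : q ≠ ∞) (x : ℝ≥0∞) :
    (x ^ q.toReal) ^ q⁻¹.toReal = x := by
  rw [inv_toReal', ENNReal.rpow_rpow_inv (toReal_pos' hq h).ne']

lemma lq_mono (q : ℝ≥0∞) {x y : ℤ → ℝ≥0∞} (h : ∀ k, x k ≤ y k) : lq q x ≤ lq q y := by
  unfold lq
  split_ifs
  · exact iSup_mono h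
  · gcongr
    exact h _

lemma lq_const_mul {q : ℝ≥0∞} (hq : 0 < q) (c : ℝ≥0∞) (x : ℤ → ℝ≥0∞) :
    lq q (fun k => c * x k) = c * lq q x := by
  unfold lq
  split_ifs with h
  · rw [ENNReal.mul_iSup]
  · simp_rw [ENNReal.mul_rpow_of_nonneg _ _ (toReal_pos' hq h).le, ENNReal.tsum_mul_left]
    rw [ENNReal.mul_rpow_of_nonneg _ _ ENNReal.toReal_nonneg, rpow_rpow_inv' hq h]

lemma lq_le_mul {q : ℝ≥0∞} (hq : 0 < q) {c : ℝ≥0∞} {x y : ℤ → ℝ≥0∞}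
    (h : ∀ k, x k ≤ c * y k) : lq q x ≤ c * lq q y :=
  (lq_mono q h).trans (lq_const_mul hq c y).le

lemma le_lq {q : ℝ≥0∞} (hq : 0 < q) (x : ℤ → ℝ≥0∞) (k : ℤ) : x k ≤ lq q x := by
  unfold lq
  split_ifs with h
  · exact le_iSup x k
  · calc x k = (x k ^ q.toReal) ^ q⁻¹.toReal := (rpow_rpow_inv' hq h _).symm
      _ ≤ _ := by
        gcongr
        exact ENNReal.le_tsum (f := fun k => x k ^ q.toReal) k

lemma lq_comp_inj (q : ℝ≥0∞) (x : ℤ → ℝ≥0∞) {σ : ℤ → ℤ} (hσ : Function.Injective σ) :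
    lq q (fun k => x (σ k)) ≤ lq q x := by
  unfold lq
  split_ifs with h
  · exact iSup_comp_le x σ
  · exact ENNReal.rpow_le_rpow (ENNReal.tsum_comp_le_tsum_of_injective hσ (fun k => x k ^ q.toReal))
      ENNReal.toReal_nonneg

lemma lq_comp_fib {q : ℝ≥0∞} (D : ℕ) :
    ∃ C : ℝ≥0∞, C ≠ ∞ ∧ ∀ (x : ℤ → ℝ≥0∞) (σ : ℤ → ℤ),
      (∀ k l, σ k = σ l → |k - l| ≤ D) → lq q (fun k => x (σ k)) ≤ C * lq q x := by
  refine ⟨1 + (D + 1 : ℝ≥0∞) ^ q⁻¹.toReal, by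
    refine ENNReal.add_ne_top.2 ⟨by simp, ENNReal.rpow_ne_top_of_nonneg ENNReal.toReal_nonneg ?_⟩
    simp, fun x σ hσ => ?_⟩
  unfold lq
  split_ifs with h
  · exact (iSup_comp_le x σ).trans (le_mul_of_one_le_left' le_self_add)
  · refine le_trans ?_ (mul_le_mul_left le_add_self _)
    rw [← ENNReal.mul_rpow_of_nonneg _ _ ENNReal.toReal_nonneg]
    gcongr
    have hinj : Function.Injective (fun k : ℤ => ((σ k, (k : ZMod (D + 1))) : ℤ × ZMod (D + 1))) := by
      intro k l hkl
      simp only [Prod.mk.injEq] at hkl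
      have h1 := hσ k l hkl.1
      have h2 := (ZMod.intCast_eq_intCast_iff_dvd_sub _ _ _).1 hkl.2
      have : l - k = 0 := by
        apply Int.eq_zero_of_abs_lt_dvd h2
        rw [abs_sub_comm]
        push_cast
        omega
      omega
    have := ENNReal.tsum_comp_le_tsum_of_injective hinj
      (fun p : ℤ × ZMod (D + 1) => x p.1 ^ q.toReal)
    refine this.trans ?_
    rw [ENNReal.tsum_prod (f := fun (a : ℤ) (_ : ZMod (D + 1)) => x a ^ q.toReal)]
    simp only [tsum_fintype, Finset.sum_const, Finset.card_univ, ZMod.card, nsmul_eq_mul]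
    rw [ENNReal.tsum_mul_left]
    push_cast
    exact le_rfl

lemma lq_add {q : ℝ≥0∞} (hq : 0 < q) :
    ∃ C : ℝ≥0∞, C ≠ ∞ ∧ ∀ (x y : ℤ → ℝ≥0∞),
      lq q (fun k => x k + y k) ≤ C * (lq q x + lq q y) := by
  refine ⟨2 * (1 + (2 : ℝ≥0∞) ^ q⁻¹.toReal), by
    refine ENNReal.mul_ne_top (by simp) (ENNReal.add_ne_top.2 ⟨by simp, ENNReal.rpow_ne_top_of_nonneg ENNReal.toReal_nonneg ?_⟩)
    simp, fun x y => ?_⟩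
  have h1 : ∀ k, x k + y k ≤ 2 * (x k ⊔ y k) := fun k => by
    rw [two_mul]; exact add_le_add le_sup_left le_sup_right
  refine (lq_le_mul hq h1).trans ?_
  rw [mul_assoc]
  gcongr
  unfold lq
  split_ifs with h
  · rw [iSup_sup_eq]
    refine le_trans ?_ (le_mul_of_one_le_left' le_self_add)
    exact sup_le le_self_add le_add_self
  · refine le_trans ?_ (mul_le_mul_left le_add_self _)
    have hp := toReal_pos' hq h
    set X := ∑' k, x k ^ q.toReal
    set Y := ∑' k, y k ^ q.toReal
    have h2 : ∑' k, (x k ⊔ y k) ^ q.toReal ≤ X + Y := by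
      rw [← ENNReal.tsum_add]
      refine ENNReal.tsum_le_tsum fun k => ?_
      rcases le_total (x k) (y k) with h | h
      · rw [sup_eq_right.2 h]; exact le_add_self
      · rw [sup_eq_left.2 h]; exact le_self_add
    have h3 : X + Y ≤ 2 * (X ⊔ Y) := by
      rw [two_mul]; exact add_le_add le_sup_left le_sup_right
    refine (ENNReal.rpow_le_rpow (h2.trans h3) ENNReal.toReal_nonneg).trans ?_
    rw [ENNReal.mul_rpow_of_nonneg _ _ ENNReal.toReal_nonneg]
    gcongr
    rcases le_total X Y with h | h
    · rw [sup_eq_right.2 h]; exact le_add_self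
    · rw [sup_eq_left.2 h]; exact le_self_add

lemma tsum_geom {s : ℝ} (hs : 0 < s) :
    ∃ C : ℝ≥0∞, C ≠ ∞ ∧ ∀ n : ℤ, ∑' j : ℤ, ENNReal.ofReal (pw (-(s * |(n:ℝ) - j|))) ≤ C := by
  have hr : pw (-s) < 1 := by rw [← pw_zero]; exact pw_lt (by linarith)
  have hr' : ENNReal.ofReal (pw (-s)) < 1 := by
    rw [← ENNReal.ofReal_one]; exact (ENNReal.ofReal_lt_ofReal_iff one_pos).2 hr
  have hnat : ∀ m : ℕ, ENNReal.ofReal (pw (-(s * m))) = ENNReal.ofReal (pw (-s)) ^ m := by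
    intro m
    rw [← ENNReal.ofReal_pow (pw_pos _).le, ← Real.rpow_natCast, pw_rpow]
    congr 2; ring
  refine ⟨(1 - ENNReal.ofReal (pw (-s)))⁻¹ + (1 - ENNReal.ofReal (pw (-s)))⁻¹, ?_, fun n => ?_⟩
  · have : (1 - ENNReal.ofReal (pw (-s)))⁻¹ ≠ ∞ := by
      rw [ENNReal.inv_ne_top]
      exact (tsub_pos_of_lt hr').ne'
    exact ENNReal.add_ne_top.2 ⟨this, this⟩
  · have hinj : Function.Injective (fun j : ℤ => if n ≤ j then (Sum.inl (j - n).toNat : ℕ ⊕ ℕ) else Sum.inr (n - j).toNat) := by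
      intro j k hjk
      simp only at hjk
      split_ifs at hjk <;> simp at hjk <;> omega
    have h1 : ∀ j : ℤ, ENNReal.ofReal (pw (-(s * |(n:ℝ) - j|))) =
        (fun p : ℕ ⊕ ℕ => Sum.elim (fun m => ENNReal.ofReal (pw (-s)) ^ m) (fun m => ENNReal.ofReal (pw (-s)) ^ m) p)
          (if n ≤ j then (Sum.inl (j - n).toNat : ℕ ⊕ ℕ) else Sum.inr (n - j).toNat) := by
      intro j
      split_ifs with h
      · simp only [Sum.elim_inl]
        rw [← hnat]
        have : (((j - n).toNat : ℕ) : ℝ) = (j:ℝ) - n := by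
          have : (((j - n).toNat : ℕ) : ℤ) = j - n := Int.toNat_of_nonneg (by omega)
          exact_mod_cast this
        rw [this, abs_sub_comm, abs_of_nonneg]
        have : (n:ℝ) ≤ j := by exact_mod_cast h
        linarith
      · simp only [Sum.elim_inr]
        rw [← hnat]
        have : (((n - j).toNat : ℕ) : ℝ) = (n:ℝ) - j := by
          have : (((n - j).toNat : ℕ) : ℤ) = n - j := Int.toNat_of_nonneg (by omega)
          exact_mod_cast this
        rw [this, abs_of_nonneg]
        have : (j:ℝ) ≤ n := by exact_mod_cast (by omega : j ≤ n)
        linarith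
    simp_rw [h1]
    refine (ENNReal.tsum_comp_le_tsum_of_injective hinj _).trans ?_
    rw [Summable.tsum_sum (ENNReal.summable) (ENNReal.summable)]
    simp [ENNReal.tsum_geometric]

lemma ofReal_pw_rpow (x s : ℝ) : ENNReal.ofReal (pw x) ^ s = ENNReal.ofReal (pw (x * s)) := by
  rw [ENNReal.ofReal_rpow_of_pos (pw_pos _), pw_rpow]

lemma lq_geom {q : ℝ≥0∞} (hq : 0 < q) {s : ℝ} (hs : 0 < s) :
    ∃ C : ℝ≥0∞, C ≠ ∞ ∧ ∀ n : ℤ, lq q (fun j => ENNReal.ofReal (pw (-(s * |(n:ℝ) - j|)))) ≤ C := by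
  by_cases h : q = ∞
  · refine ⟨1, by simp, fun n => ?_⟩
    unfold lq
    rw [if_pos h]
    refine iSup_le fun j => ?_
    rw [← ENNReal.ofReal_one, ← pw_zero]
    exact ENNReal.ofReal_le_ofReal (pw_mono (by have := abs_nonneg ((n:ℝ)-j); nlinarith))
  · have hp := toReal_pos' hq h
    obtain ⟨C, hC, hCn⟩ := tsum_geom (mul_pos hs hp)
    refine ⟨C ^ q⁻¹.toReal, ENNReal.rpow_ne_top_of_nonneg ENNReal.toReal_nonneg hC, fun n => ?_⟩
    unfold lq
    rw [if_neg h]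
    gcongr
    refine le_trans (le_of_eq ?_) (hCn n)
    congr 1; ext j
    rw [ofReal_pw_rpow]
    congr 2; ring

/-- Schur / Hardy type inequality. -/
lemma lq_hardy {q : ℝ≥0∞} (hq : 0 < q) {s : ℝ} (hs : 0 < s) :
    ∃ C : ℝ≥0∞, C ≠ ∞ ∧ ∀ x : ℤ → ℝ≥0∞,
      lq q (fun n => ⨆ j : ℤ, ENNReal.ofReal (pw (-(s * |(n:ℝ) - j|))) * x j) ≤ C * lq q x := by
  by_cases h : q = ∞
  · refine ⟨1, by simp, fun x => ?_⟩
    unfold lq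
    rw [if_pos h, if_pos h, one_mul]
    refine iSup_le fun n => iSup_le fun j => ?_
    refine le_trans (le_trans (mul_le_mul_left ?_ _) (one_mul (x j)).le) (le_iSup x j)
    rw [← ENNReal.ofReal_one, ← pw_zero]
    exact ENNReal.ofReal_le_ofReal (pw_mono (by have := abs_nonneg ((n:ℝ)-j); nlinarith))
  · have hp := toReal_pos' hq h
    obtain ⟨C, hC, hCn⟩ := tsum_geom (mul_pos hs hp)
    refine ⟨C ^ q⁻¹.toReal, ENNReal.rpow_ne_top_of_nonneg ENNReal.toReal_nonneg hC, fun x => ?_⟩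
    unfold lq
    rw [if_neg h, if_neg h, ← ENNReal.mul_rpow_of_nonneg _ _ ENNReal.toReal_nonneg]
    gcongr
    calc ∑' n : ℤ, (⨆ j : ℤ, ENNReal.ofReal (pw (-(s * |(n:ℝ) - j|))) * x j) ^ q.toReal
        ≤ ∑' n : ℤ, ∑' j : ℤ, ENNReal.ofReal (pw (-(s * q.toReal * |(n:ℝ) - j|))) * x j ^ q.toReal := by
          refine ENNReal.tsum_le_tsum fun n => ?_
          rw [← ENNReal.le_rpow_inv_iff hp]
          refine iSup_le fun j => ?_
          rw [ENNReal.le_rpow_inv_iff hp]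
          rw [ENNReal.mul_rpow_of_nonneg _ _ hp.le, ofReal_pw_rpow]
          refine le_trans (le_of_eq ?_) (ENNReal.le_tsum j)
          congr 3; ring
      _ = ∑' j : ℤ, (∑' n : ℤ, ENNReal.ofReal (pw (-(s * q.toReal * |(j:ℝ) - n|)))) * x j ^ q.toReal := by
          rw [ENNReal.tsum_comm]
          congr 1; ext j
          rw [ENNReal.tsum_mul_right]
          simp_rw [abs_sub_comm]
      _ ≤ ∑' j : ℤ, C * x j ^ q.toReal := by
          refine ENNReal.tsum_le_tsum fun j => ?_
          gcongr
          exact hCn j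
      _ = _ := ENNReal.tsum_mul_left

lemma lq_le_sup {q : ℝ≥0∞} (hq : 0 < q) {s : ℝ} (hs : 0 < s) :
    ∃ C : ℝ≥0∞, C ≠ ∞ ∧ ∀ (x : ℤ → ℝ≥0∞) (n : ℤ),
      lq q (fun j => ENNReal.ofReal (pw (-(2 * s * |(n:ℝ) - j|))) * x j) ≤
        C * ⨆ j : ℤ, ENNReal.ofReal (pw (-(s * |(n:ℝ) - j|))) * x j := by
  obtain ⟨C, hC, h⟩ := lq_geom hq hs
  refine ⟨C, hC, fun x n => ?_⟩
  set S := ⨆ j : ℤ, ENNReal.ofReal (pw (-(s * |(n:ℝ) - j|))) * x j with hS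
  have : ∀ j : ℤ, ENNReal.ofReal (pw (-(2 * s * |(n:ℝ) - j|))) * x j ≤
      S * ENNReal.ofReal (pw (-(s * |(n:ℝ) - j|))) := by
    intro j
    rw [show -(2 * s * |(n:ℝ) - j|) = -(s * |(n:ℝ) - j|) + -(s * |(n:ℝ) - j|) by ring, pw_add,
      ENNReal.ofReal_mul (pw_pos _).le, mul_assoc, mul_comm]
    gcongr
    exact le_iSup (fun j : ℤ => ENNReal.ofReal (pw (-(s * |(n:ℝ) - j|))) * x j) j
  refine (lq_le_mul hq this).trans ?_
  rw [mul_comm]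
  gcongr
  exact h n

def Dy (j : ℤ) : Set ℝ := Ico (pw j) (pw (j + 1))

def SS (P : Set ℤ) : Set ℝ := ⋃ j ∈ P, Dy j

lemma Dy_pos {j : ℤ} {u : ℝ} (h : u ∈ Dy j) : 0 < u := (pw_pos _).trans_le h.1

lemma Dy_meas (j : ℤ) : MeasurableSet (Dy j) := measurableSet_Ico

lemma Dy_vol (j : ℤ) : volume (Dy j) = ENNReal.ofReal (pw j) := by
  unfold Dy
  rw [Real.volume_Ico, pw_add, pw_one]
  congr 1; ring

lemma pw_mem_Dy (j : ℤ) : pw j ∈ Dy j := ⟨le_rfl, pw_lt (by linarith)⟩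

lemma exists_Dy {u : ℝ} (hu : 0 < u) : ∃ j : ℤ, u ∈ Dy j := by
  refine ⟨⌊Real.logb 2 u⌋, ?_, ?_⟩
  · conv_rhs => rw [← pw_logb hu]
    exact pw_mono (Int.floor_le _)
  · conv_lhs => rw [← pw_logb hu]
    exact pw_lt (Int.lt_floor_add_one _)

lemma Dy_disj {i j : ℤ} (h : i ≠ j) : Disjoint (Dy i) (Dy j) := by
  rw [Set.disjoint_left]
  intro u hi hj
  apply h
  have h1 : (i:ℝ) < j + 1 := pw_lt_iff.1 (hi.1.trans_lt hj.2)
  have h2 : (j:ℝ) < i + 1 := pw_lt_iff.1 (hj.1.trans_lt hi.2)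
  have h3 : i < j + 1 := by exact_mod_cast h1
  have h4 : j < i + 1 := by exact_mod_cast h2
  omega

lemma SS_univ : SS univ = Ioi 0 := by
  ext u
  simp only [SS, mem_univ, iUnion_true, mem_iUnion, mem_Ioi]
  exact ⟨fun ⟨j, hj⟩ => Dy_pos hj, fun h => exists_Dy h⟩

lemma SS_Ici (n : ℤ) : SS (Ici n) = Ici (pw n) := by
  ext u
  simp only [SS, mem_iUnion, mem_Ici, exists_prop]
  constructor
  · rintro ⟨j, hj, hu⟩
    exact (pw_mono (by exact_mod_cast hj)).trans hu.1
  · intro h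
    obtain ⟨j, hj⟩ := exists_Dy ((pw_pos _).trans_le h)
    refine ⟨j, ?_, hj⟩
    have : (n:ℝ) < j + 1 := pw_lt_iff.1 (h.trans_lt hj.2)
    have h3 : n < j + 1 := by exact_mod_cast this
    omega

lemma SS_Iio (n : ℤ) : SS (Iio n) = Ioo 0 (pw n) := by
  ext u
  simp only [SS, mem_iUnion, mem_Iio, exists_prop, mem_Ioo]
  constructor
  · rintro ⟨j, hj, hu⟩
    refine ⟨Dy_pos hu, hu.2.trans_le (pw_mono ?_)⟩
    exact_mod_cast (by omega : j + 1 ≤ n)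
  · rintro ⟨h0, h⟩
    obtain ⟨j, hj⟩ := exists_Dy h0
    refine ⟨j, ?_, hj⟩
    have : (j:ℝ) < n := pw_lt_iff.1 (hj.1.trans_lt h)
    exact_mod_cast this

lemma SS_meas (P : Set ℤ) : MeasurableSet (SS P) :=
  MeasurableSet.biUnion (Set.to_countable P) fun j _ => Dy_meas j

lemma ind_rpow {p : ℝ} (hp : 0 < p) (P : Set ℤ) (x : ℤ → ℝ≥0∞) (k : ℤ) :
    P.indicator x k ^ p = P.indicator (fun k => x k ^ p) k := by
  by_cases h : k ∈ P
  · simp [h]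
  · simp [h, hp]

lemma ind_mul (P : Set ℤ) (c : ℝ≥0∞) (x : ℤ → ℝ≥0∞) (k : ℤ) :
    P.indicator (fun k => c * x k) k = c * P.indicator x k := by
  by_cases h : k ∈ P
  · simp [h]
  · simp [h]

lemma lint_SS (P : Set ℤ) (f : ℝ → ℝ≥0∞) :
    ∫⁻ t in SS P, f t = ∑' j, P.indicator (fun j => ∫⁻ t in Dy j, f t) j := by
  unfold SS
  rw [lintegral_biUnion (Set.to_countable P) (fun j _ => Dy_meas j)
    (fun i _ j _ hij => Dy_disj hij), tsum_subtype P (fun j => ∫⁻ t in Dy j, f t)]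

lemma pw_vol_cancel {q : ℝ≥0∞} (hq : 0 < q) (h : q ≠ ∞) (j : ℤ) (x : ℝ≥0∞) :
    (ENNReal.ofReal (pw (-(j * q⁻¹.toReal))) * x) ^ q.toReal * ENNReal.ofReal (pw j) = x ^ q.toReal := by
  have hp := toReal_pos' hq h
  rw [ENNReal.mul_rpow_of_nonneg _ _ hp.le, ofReal_pw_rpow, mul_right_comm,
    ← ENNReal.ofReal_mul (pw_pos _).le, ← pw_add, inv_toReal']
  have : -(j * (q.toReal)⁻¹) * q.toReal + j = 0 := by field_simp; ring
  rw [this, pw_zero, ENNReal.ofReal_one, one_mul]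

lemma Lq_le {q : ℝ≥0∞} (hq : 0 < q) (P : Set ℤ) (g : ℝ → ℝ≥0∞) (x : ℤ → ℝ≥0∞)
    (h : ∀ j ∈ P, ∀ u ∈ Dy j, g u ≤ ENNReal.ofReal (pw (-(j * q⁻¹.toReal))) * x j) :
    LqNorm q (SS P) g ≤ lq q (P.indicator x) := by
  unfold LqNorm lq
  split_ifs with hi
  · refine essSup_le_of_ae_le _ ?_
    rw [EventuallyLE, ae_restrict_iff' (SS_meas P)]
    refine Eventually.of_forall fun u hu => ?_
    simp only [SS, mem_iUnion, exists_prop] at hu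
    obtain ⟨j, hj, hu⟩ := hu
    have := h j hj u hu
    simp only [hi, ENNReal.inv_top, ENNReal.toReal_zero, mul_zero, neg_zero, pw_zero,
      ENNReal.ofReal_one, one_mul] at this
    refine this.trans (le_trans ?_ (le_iSup _ j))
    simp [hj]
  · have hp := toReal_pos' hq hi
    gcongr
    rw [lint_SS]
    refine ENNReal.tsum_le_tsum fun j => ?_
    rw [ind_rpow hp]
    by_cases hj : j ∈ P
    · simp only [hj, indicator_of_mem]
      calc ∫⁻ t in Dy j, g t ^ q.toReal ≤ ∫⁻ t in Dy j, (ENNReal.ofReal (pw (-(j * q⁻¹.toReal))) * x j) ^ q.toReal :=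
            setLIntegral_mono' (Dy_meas j) fun u hu => ENNReal.rpow_le_rpow (h j hj u hu) hp.le
        _ = _ := by rw [setLIntegral_const, Dy_vol, pw_vol_cancel hq hi]
    · simp [hj]

lemma lq_le_Lq {q : ℝ≥0∞} (hq : 0 < q) (P : Set ℤ) (g : ℝ → ℝ≥0∞) (x : ℤ → ℝ≥0∞)
    (h : ∀ j ∈ P, ∀ u ∈ Dy j, ENNReal.ofReal (pw (-(j * q⁻¹.toReal))) * x j ≤ g u) :
    lq q (P.indicator x) ≤ LqNorm q (SS P) g := by
  unfold LqNorm lq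
  split_ifs with hi
  · refine iSup_le fun j => ?_
    by_cases hj : j ∈ P
    · simp only [hj, indicator_of_mem]
      by_contra hlt
      push Not at hlt
      have h1 := ae_lt_of_essSup_lt hlt
      have h2 : ∀ᵐ u ∂(volume.restrict (Dy j)), g u < x j :=
        ae_restrict_of_ae_restrict_of_subset (subset_biUnion_of_mem (u := Dy) hj) h1
      rw [ae_restrict_iff' (Dy_meas j)] at h2
      have h3 : Dy j ⊆ {u | ¬ (u ∈ Dy j → g u < x j)} := by
        intro u hu
        simp only [mem_ofPred_eq, Classical.not_imp, not_lt]
        refine ⟨hu, ?_⟩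
        have := h j hj u hu
        simpa [hi, pw_zero] using this
      have h4 := measure_mono_null h3 h2
      rw [Dy_vol, ENNReal.ofReal_eq_zero] at h4
      exact absurd h4 (not_le.2 (pw_pos _))
    · simp [hj]
  · have hp := toReal_pos' hq hi
    gcongr
    rw [lint_SS]
    refine ENNReal.tsum_le_tsum fun j => ?_
    rw [ind_rpow hp]
    by_cases hj : j ∈ P
    · simp only [hj, indicator_of_mem]
      calc x j ^ q.toReal = ∫⁻ t in Dy j, (ENNReal.ofReal (pw (-(j * q⁻¹.toReal))) * x j) ^ q.toReal := by
            rw [setLIntegral_const, Dy_vol, pw_vol_cancel hq hi]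
        _ ≤ _ := setLIntegral_mono' (Dy_meas j) fun u hu => ENNReal.rpow_le_rpow (h j hj u hu) hp.le
    · simp [hj]

lemma Lq_Ioi_eq (q : ℝ≥0∞) (t : ℝ) (g : ℝ → ℝ≥0∞) : LqNorm q (Ioi t) g = LqNorm q (Ici t) g := by
  unfold LqNorm
  rw [Measure.restrict_congr_set Ioi_ae_eq_Ici]

lemma Lq_mono_set (q : ℝ≥0∞) {s t : Set ℝ} (h : s ⊆ t) (g : ℝ → ℝ≥0∞) :
    LqNorm q s g ≤ LqNorm q t g := by
  unfold LqNorm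
  split_ifs
  · exact essSup_mono_measure (Measure.absolutelyContinuous_of_le (Measure.restrict_mono h le_rfl))
  · exact ENNReal.rpow_le_rpow (lintegral_mono_set h) ENNReal.toReal_nonneg

lemma Lq_congr (q : ℝ≥0∞) {s : Set ℝ} (hs : MeasurableSet s) {g g' : ℝ → ℝ≥0∞}
    (h : ∀ u ∈ s, g u = g' u) :
    LqNorm q s g = LqNorm q s g' := by
  unfold LqNorm
  split_ifs
  · apply essSup_congr_ae
    rw [EventuallyEq, ae_restrict_iff' hs]
    exact Eventually.of_forall h
  · rw [setLIntegral_congr_fun (g := fun u => g' u ^ q.toReal) hs (fun u hu => by simp only [h u hu])]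

/-- discretization of functions -/
def DC (C : ℝ≥0∞) (F : ℝ → ℝ≥0∞) (X : ℤ → ℝ≥0∞) : Prop :=
  ∀ k : ℤ, ∀ u ∈ Dy k, F u ≤ C * X k ∧ X k ≤ C * F u

def RDC (w : ℝ → ℝ) : Prop :=
  (∀ u, 0 < u → 0 < w u) ∧ ∃ C : ℝ, 0 < C ∧ ∀ k : ℤ, ∀ u ∈ Dy k, w u ≤ C * w (pw k) ∧ w (pw k) ≤ C * w u

lemma RDC.mul {v w : ℝ → ℝ} (hv : RDC v) (hw : RDC w) : RDC (fun u => v u * w u) := by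
  obtain ⟨pv, C, hC, h⟩ := hv
  obtain ⟨pw', D, hD, h'⟩ := hw
  refine ⟨fun u hu => mul_pos (pv u hu) (pw' u hu), C * D, mul_pos hC hD, fun k u hu => ?_⟩
  have h1 := h k u hu
  have h2 := h' k u hu
  have a1 := pv u (Dy_pos hu)
  have a2 := pw' u (Dy_pos hu)
  have a3 := pv _ (pw_pos k)
  have a4 := pw' _ (pw_pos k)
  constructor
  · calc v u * w u ≤ (C * v (pw k)) * (D * w (pw k)) := mul_le_mul h1.1 h2.1 a2.le (by positivity)
      _ = _ := by ring
  · calc v (pw k) * w (pw k) ≤ (C * v u) * (D * w u) := mul_le_mul h1.2 h2.2 a4.le (by positivity)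
      _ = _ := by ring

lemma RDC.inv {v : ℝ → ℝ} (hv : RDC v) : RDC (fun u => (v u)⁻¹) := by
  obtain ⟨pv, C, hC, h⟩ := hv
  refine ⟨fun u hu => inv_pos.2 (pv u hu), C, hC, fun k u hu => ?_⟩
  have h1 := h k u hu
  have a1 := pv u (Dy_pos hu)
  have a3 := pv _ (pw_pos k)
  constructor
  · rw [inv_le_iff_one_le_mul₀ a1, mul_right_comm, ← div_eq_mul_inv, one_le_div a3]; exact h1.2
  · rw [inv_le_iff_one_le_mul₀ a3, mul_right_comm, ← div_eq_mul_inv, one_le_div a1]; exact h1.1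

lemma RDC.rpow_nonneg {v : ℝ → ℝ} (hv : RDC v) {s : ℝ} (hs : 0 ≤ s) : RDC (fun u => (v u) ^ s) := by
  obtain ⟨pv, C, hC, h⟩ := hv
  refine ⟨fun u hu => Real.rpow_pos_of_pos (pv u hu) _, C ^ s, Real.rpow_pos_of_pos hC _, fun k u hu => ?_⟩
  have h1 := h k u hu
  have a1 := pv u (Dy_pos hu)
  have a3 := pv _ (pw_pos k)
  constructor
  · rw [← Real.mul_rpow hC.le a3.le]; exact Real.rpow_le_rpow a1.le h1.1 hs
  · rw [← Real.mul_rpow hC.le a1.le]; exact Real.rpow_le_rpow a3.le h1.2 hs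

lemma RDC.congr {v w : ℝ → ℝ} (hv : RDC v) (h : ∀ u, 0 < u → w u = v u) : RDC w := by
  obtain ⟨pv, C, hC, hh⟩ := hv
  refine ⟨fun u hu => by rw [h u hu]; exact pv u hu, C, hC, fun k u hu => ?_⟩
  rw [h u (Dy_pos hu), h _ (pw_pos k)]
  exact hh k u hu

lemma RDC.rpow {v : ℝ → ℝ} (hv : RDC v) (s : ℝ) : RDC (fun u => (v u) ^ s) := by
  rcases le_total 0 s with hs | hs
  · exact hv.rpow_nonneg hs
  · refine ((hv.rpow_nonneg (s := -s) (by linarith)).inv).congr fun u hu => ?_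
    rw [Real.rpow_neg (hv.1 u hu).le, inv_inv]

lemma RDC_id : RDC (fun u => u) := by
  refine ⟨fun u hu => hu, 2, by norm_num, fun k u hu => ?_⟩
  have h1 := hu.1
  have h2 := hu.2
  rw [pw_add, pw_one] at h2
  have := pw_pos k
  constructor <;> linarith

lemma RDC.div {v w : ℝ → ℝ} (hv : RDC v) (hw : RDC w) : RDC (fun u => v u / w u) :=
  (hv.mul hw.inv).congr fun _ _ => div_eq_mul_inv _ _

lemma lq_indicator_mul {q : ℝ≥0∞} (hq : 0 < q) (P : Set ℤ) (c : ℝ≥0∞) (x : ℤ → ℝ≥0∞) :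
    lq q (P.indicator fun k => c * x k) = c * lq q (P.indicator x) := by
  rw [← lq_const_mul hq]
  congr 1; ext k
  rw [ind_mul]

lemma disc {w : ℝ → ℝ} (hw : RDC w) {q : ℝ≥0∞} (hq : 0 < q) (θ : ℝ) {C' : ℝ≥0∞} (hC' : C' ≠ ∞) :
    ∃ C : ℝ≥0∞, C ≠ ∞ ∧ ∀ F X, DC C' F X → ∀ P : Set ℤ,
      LqNorm q (SS P) (fun u => ENNReal.ofReal (u ^ (-θ - q⁻¹.toReal) * w u) * F u) ≤
        C * lq q (P.indicator fun k => ENNReal.ofReal (pw (-(k * θ)) * w (pw k)) * X k) ∧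
      lq q (P.indicator fun k => ENNReal.ofReal (pw (-(k * θ)) * w (pw k)) * X k) ≤
        C * LqNorm q (SS P) (fun u => ENNReal.ofReal (u ^ (-θ - q⁻¹.toReal) * w u) * F u) := by
  obtain ⟨pos, D, hD, h⟩ := (RDC_id.rpow (-θ - q⁻¹.toReal)).mul hw
  have hC0 : 1 + ENNReal.ofReal D * C' ≠ 0 := by simp
  have hCt : 1 + ENNReal.ofReal D * C' ≠ ∞ :=
    ENNReal.add_ne_top.2 ⟨by simp, ENNReal.mul_ne_top (by simp) hC'⟩
  refine ⟨1 + ENNReal.ofReal D * C', hCt, fun F X hFX P => ?_⟩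
  have key : ∀ k : ℤ, pw k ^ (-θ - q⁻¹.toReal) * w (pw k) =
      pw (-(k * q⁻¹.toReal)) * (pw (-(k * θ)) * w (pw k)) := by
    intro k
    rw [pw_rpow, ← mul_assoc, ← pw_add]
    congr 2; ring
  have keyE : ∀ k : ℤ, ENNReal.ofReal (pw k ^ (-θ - q⁻¹.toReal) * w (pw k)) * X k =
      ENNReal.ofReal (pw (-(k * q⁻¹.toReal))) * (ENNReal.ofReal (pw (-(k * θ)) * w (pw k)) * X k) := by
    intro k
    rw [key, ENNReal.ofReal_mul (pw_pos _).le, mul_assoc]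
  constructor
  · rw [← lq_indicator_mul hq]
    refine Lq_le hq P _ _ fun j _ u hu => ?_
    have h1 := (h j u hu).1
    have h2 := (hFX j u hu).1
    rw [mul_left_comm, ← keyE]
    calc _ ≤ ENNReal.ofReal (D * (pw j ^ (-θ - q⁻¹.toReal) * w (pw j))) * (C' * X j) :=
          mul_le_mul' (ENNReal.ofReal_le_ofReal h1) h2
      _ = (ENNReal.ofReal D * C') * (ENNReal.ofReal (pw j ^ (-θ - q⁻¹.toReal) * w (pw j)) * X j) := by
          rw [ENNReal.ofReal_mul hD.le]; ring
      _ ≤ _ := mul_le_mul_left le_add_self _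
  · rw [← ENNReal.inv_mul_le_iff hC0 hCt, ← lq_indicator_mul hq]
    refine lq_le_Lq hq P _ _ fun j _ u hu => ?_
    have h1 := (h j u hu).2
    have h2 := (hFX j u hu).2
    rw [mul_left_comm, ← keyE, ENNReal.inv_mul_le_iff hC0 hCt]
    calc _ ≤ ENNReal.ofReal (D * (u ^ (-θ - q⁻¹.toReal) * w u)) * (C' * F u) :=
          mul_le_mul' (ENNReal.ofReal_le_ofReal h1) h2
      _ = (ENNReal.ofReal D * C') * (ENNReal.ofReal (u ^ (-θ - q⁻¹.toReal) * w u) * F u) := by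
          rw [ENNReal.ofReal_mul hD.le]; ring
      _ ≤ _ := mul_le_mul_left le_add_self _

section K
variable {E : Type*} [AddCommGroup E]

lemma Kf_mono (N₀ N₁ : E → ℝ≥0∞) {s t : ℝ} (h : s ≤ t) (f : E) : Kf N₀ N₁ s f ≤ Kf N₀ N₁ t f :=
  iInf_mono fun g => by gcongr

lemma Kf_scale (N₀ N₁ : E → ℝ≥0∞) {s t R : ℝ} (hR : 1 ≤ R) (h : s ≤ R * t) (f : E) :
    Kf N₀ N₁ s f ≤ ENNReal.ofReal R * Kf N₀ N₁ t f := by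
  unfold Kf
  rw [ENNReal.mul_iInf_of_ne (by simp; linarith) (by simp)]
  refine iInf_mono fun g => ?_
  rw [mul_add, ← mul_assoc, ← ENNReal.ofReal_mul (by linarith)]
  gcongr
  exact le_mul_of_one_le_left' (by simpa using hR)

lemma Kf_DC (N₀ N₁ : E → ℝ≥0∞) (f : E) :
    DC 2 (fun u => Kf N₀ N₁ u f) (fun k => Kf N₀ N₁ (pw k) f) := by
  intro k u hu
  have h2 := hu.2
  rw [pw_add, pw_one] at h2
  constructor
  · have := Kf_scale N₀ N₁ (s := u) (t := pw k) (R := 2) (by norm_num) (by linarith) f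
    simpa using this
  · exact (Kf_mono N₀ N₁ hu.1 f).trans (le_mul_of_one_le_left' (by norm_num))

lemma Kf_le_norms {N₀ N₁ M₀ M₁ : E → ℝ≥0∞} {C : ℝ≥0∞} (hC0 : C ≠ 0) (hC : C ≠ ∞)
    (h0 : ∀ f, N₀ f ≤ C * M₀ f) (h1 : ∀ f, N₁ f ≤ C * M₁ f) (t : ℝ) (f : E) :
    Kf N₀ N₁ t f ≤ C * Kf M₀ M₁ t f := by
  unfold Kf
  rw [ENNReal.mul_iInf_of_ne hC0 hC]
  refine iInf_mono fun g => ?_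
  rw [mul_add, mul_left_comm]
  gcongr
  · exact h0 g
  · exact h1 _

end K

lemma SV_gr {b : ℝ → ℝ} (hb : SlowlyVarying b) {ε : ℝ} (hε : 0 < ε) :
    ∃ C : ℝ, 0 < C ∧ ∀ s t R : ℝ, 0 < s → 0 < t → 1 ≤ R → s ≤ R * t → t ≤ R * s →
      b s ≤ C * R ^ ε * b t := by
  obtain ⟨-, pos, h⟩ := hb
  obtain ⟨⟨g, hg, C, hC, hgC⟩, ⟨g', hg', D, hD, hgD⟩⟩ := h ε hε
  refine ⟨C * C + D * D, by positivity, fun s t R hs ht hR h1 h2 => ?_⟩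
  have bt := pos t ht
  have hRe : 0 < R ^ ε := Real.rpow_pos_of_pos (by linarith) _
  have hsp : 0 < s ^ ε := Real.rpow_pos_of_pos hs _
  have htp : 0 < t ^ ε := Real.rpow_pos_of_pos ht _
  rcases le_total s t with hst | hst
  · have a1 := (hgC s hs).2
    have a2 := (hgC t ht).1
    have a3 := hg hs ht hst
    simp only at a1 a2
    have a4 : g t ≤ C * (t ^ ε * b t) := by rwa [inv_mul_le_iff₀ hC] at a2
    have a5 : t ^ ε ≤ R ^ ε * s ^ ε := by
      rw [← Real.mul_rpow (by linarith) hs.le]; exact Real.rpow_le_rpow ht.le h2 hε.le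
    have a6 : s ^ ε * b s ≤ s ^ ε * ((C * C) * R ^ ε * b t) := by
      calc s ^ ε * b s ≤ C * g s := a1
        _ ≤ C * (C * (t ^ ε * b t)) := by gcongr; exact a3.trans a4
        _ ≤ C * (C * ((R ^ ε * s ^ ε) * b t)) := by gcongr
        _ = _ := by ring
    have a7 := le_of_mul_le_mul_left a6 hsp
    refine a7.trans ?_
    gcongr
    nlinarith
  · have a1 := (hgD s hs).2
    have a2 := (hgD t ht).1
    have a3 := hg' ht hs hst
    simp only at a1 a2
    rw [Real.rpow_neg hs.le] at a1
    rw [Real.rpow_neg ht.le] at a2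
    have a4 : g' t ≤ D * ((t ^ ε)⁻¹ * b t) := by rwa [inv_mul_le_iff₀ hD] at a2
    have a5 : s ^ ε ≤ R ^ ε * t ^ ε := by
      rw [← Real.mul_rpow (by linarith) ht.le]; exact Real.rpow_le_rpow hs.le h1 hε.le
    have a6 : b s ≤ s ^ ε * (D * (D * ((t ^ ε)⁻¹ * b t))) := by
      rw [inv_mul_le_iff₀ hsp] at a1
      refine a1.trans ?_
      gcongr
      exact a3.trans a4
    refine a6.trans ?_
    calc s ^ ε * (D * (D * ((t ^ ε)⁻¹ * b t))) ≤ (R ^ ε * t ^ ε) * (D * (D * ((t ^ ε)⁻¹ * b t))) := by gcongr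
      _ = (D * D) * R ^ ε * b t := by field_simp
      _ ≤ _ := by gcongr; nlinarith

lemma SV_RDC {b : ℝ → ℝ} (hb : SlowlyVarying b) : RDC b := by
  obtain ⟨C, hC, h⟩ := SV_gr hb one_pos
  refine ⟨fun u hu => hb.2.1 u hu, C * 2 ^ (1:ℝ), by positivity, fun k u hu => ?_⟩
  have h1 := hu.1
  have h2 := hu.2
  rw [pw_add, pw_one] at h2
  have h3 := pw_pos k
  have h4 := Dy_pos hu
  exact ⟨h _ _ 2 h4 h3 (by norm_num) (by linarith) (by linarith),
    h _ _ 2 h3 h4 (by norm_num) (by linarith) (by linarith)⟩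

/-- slowly varying sequences -/
def SVs (w : ℤ → ℝ) : Prop :=
  (∀ k, 0 < w k) ∧ ∀ ε : ℝ, 0 < ε → ∃ C : ℝ, 0 < C ∧ ∀ j k : ℤ, w j ≤ C * pw (ε * |(j:ℝ) - k|) * w k

lemma SV_SVs {b : ℝ → ℝ} (hb : SlowlyVarying b) : SVs (fun k => b (pw k)) := by
  refine ⟨fun k => hb.2.1 _ (pw_pos _), fun ε hε => ?_⟩
  obtain ⟨C, hC, h⟩ := SV_gr hb hε
  refine ⟨C, hC, fun j k => ?_⟩
  have := h (pw j) (pw k) (pw |(j:ℝ) - k|) (pw_pos _) (pw_pos _) (by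
    rw [← pw_zero]; exact pw_mono (abs_nonneg _)) (by
    rw [← pw_add]; apply pw_mono; linarith [le_abs_self ((j:ℝ) - k)]) (by
    rw [← pw_add]; apply pw_mono; linarith [neg_abs_le ((j:ℝ) - k)])
  rwa [pw_rpow, mul_comm _ ε] at this

lemma SVs.mul {v w : ℤ → ℝ} (hv : SVs v) (hw : SVs w) : SVs (fun k => v k * w k) := by
  refine ⟨fun k => mul_pos (hv.1 k) (hw.1 k), fun ε hε => ?_⟩
  obtain ⟨C, hC, h⟩ := hv.2 (ε / 2) (by linarith)
  obtain ⟨D, hD, h'⟩ := hw.2 (ε / 2) (by linarith)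
  refine ⟨C * D, by positivity, fun j k => ?_⟩
  have a1 := hv.1 k
  have a2 := hw.1 j
  have a3 := pw_pos (ε / 2 * |(j:ℝ) - k|)
  calc v j * w j ≤ (C * pw (ε / 2 * |(j:ℝ) - k|) * v k) * (D * pw (ε / 2 * |(j:ℝ) - k|) * w k) :=
        mul_le_mul (h j k) (h' j k) a2.le (by positivity)
    _ = C * D * (pw (ε / 2 * |(j:ℝ) - k|) * pw (ε / 2 * |(j:ℝ) - k|)) * (v k * w k) := by ring
    _ = _ := by rw [← pw_add]; congr 3; ring

lemma SVs.inv {v : ℤ → ℝ} (hv : SVs v) : SVs (fun k => (v k)⁻¹) := by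
  refine ⟨fun k => inv_pos.2 (hv.1 k), fun ε hε => ?_⟩
  obtain ⟨C, hC, h⟩ := hv.2 ε hε
  refine ⟨C, hC, fun j k => ?_⟩
  have a1 := hv.1 k
  have a2 := hv.1 j
  rw [inv_le_iff_one_le_mul₀ a2, mul_right_comm, ← div_eq_mul_inv, one_le_div a1, abs_sub_comm]
  exact h k j

lemma SVs.rpow_nonneg {v : ℤ → ℝ} (hv : SVs v) {s : ℝ} (hs : 0 ≤ s) : SVs (fun k => (v k) ^ s) := by
  refine ⟨fun k => Real.rpow_pos_of_pos (hv.1 k) _, fun ε hε => ?_⟩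
  obtain ⟨C, hC, h⟩ := hv.2 (ε / (s + 1)) (by positivity)
  refine ⟨C ^ s, Real.rpow_pos_of_pos hC _, fun j k => ?_⟩
  have a1 := hv.1 k
  have a3 := pw_pos (ε / (s + 1) * |(j:ℝ) - k|)
  refine (Real.rpow_le_rpow (hv.1 j).le (h j k) hs).trans ?_
  rw [Real.mul_rpow (by positivity) a1.le, Real.mul_rpow hC.le a3.le, pw_rpow]
  have := Real.rpow_pos_of_pos hC s
  have a4 : 0 < v k ^ s := Real.rpow_pos_of_pos a1 s
  gcongr
  apply pw_mono
  rw [mul_right_comm]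
  gcongr
  rw [div_mul_eq_mul_div, div_le_iff₀ (by linarith)]
  nlinarith

lemma SVs.rpow {v : ℤ → ℝ} (hv : SVs v) (s : ℝ) : SVs (fun k => (v k) ^ s) := by
  rcases le_total 0 s with hs | hs
  · exact hv.rpow_nonneg hs
  · have := (hv.rpow_nonneg (s := -s) (by linarith)).inv
    convert this using 2 with k
    rw [Real.rpow_neg (hv.1 k).le, inv_inv]

lemma SVs.div {v w : ℤ → ℝ} (hv : SVs v) (hw : SVs w) : SVs (fun k => v k / w k) := by
  simp_rw [div_eq_mul_inv]; exact hv.mul hw.inv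

lemma lq_shift {q : ℝ≥0∞} (hq : 0 < q) {D : ℝ≥0∞} (m : ℤ) {x y : ℤ → ℝ≥0∞}
    (h : ∀ j, x j ≤ D * y (j - m)) : lq q x ≤ D * lq q y := by
  refine (lq_le_mul hq (y := fun j => y (j - m)) h).trans ?_
  gcongr
  exact lq_comp_inj q y (sub_left_injective (b := m))

lemma lq_ind_Ici {q : ℝ≥0∞} (hq : 0 < q) {D : ℝ≥0∞} {x : ℤ → ℝ≥0∞}
    (h : ∀ j, x j ≤ D * x (j + 1)) (k : ℤ) :
    lq q ((Ici k).indicator x) ≤ D * lq q ((Ici (k + 1)).indicator x) := by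
  refine lq_shift hq (-1) fun j => ?_
  by_cases hj : k ≤ j
  · simpa [indicator, hj] using h j
  · simp [indicator, hj]

lemma lq_ind_Iio {q : ℝ≥0∞} (hq : 0 < q) {D : ℝ≥0∞} {x : ℤ → ℝ≥0∞} (m : ℤ)
    (h : ∀ j, x (j + m) ≤ D * x j) (k : ℤ) :
    lq q ((Iio (k + m)).indicator x) ≤ D * lq q ((Iio k).indicator x) := by
  refine lq_shift hq m fun j => ?_
  by_cases hj : j < k + m
  · have : j - m < k := by omega
    simpa [indicator, hj, this] using h (j - m)
  · simp [indicator, hj]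

lemma SVs.step {w : ℤ → ℝ} (hw : SVs w) :
    ∃ C : ℝ, 0 < C ∧ ∀ k : ℤ, w k ≤ C * w (k + 1) ∧ w (k + 1) ≤ C * w k := by
  obtain ⟨C, hC, h⟩ := hw.2 1 one_pos
  refine ⟨C * 2, by positivity, fun k => ⟨?_, ?_⟩⟩
  · have := h k (k + 1)
    push_cast at this
    rwa [show |(k:ℝ) - (k + 1)| = 1 by rw [abs_sub_comm]; simp, mul_one, pw_one] at this
  · have := h (k + 1) k
    push_cast at this
    rwa [show |(k:ℝ) + 1 - k| = 1 by simp, mul_one, pw_one] at this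

section
variable {E : Type*} [AddCommGroup E]

def dK (N₀ N₁ : E → ℝ≥0∞) (q : ℝ≥0∞) (w : ℤ → ℝ) (f : E) : ℝ≥0∞ :=
  lq q (fun k => ENNReal.ofReal (w k) * Kf N₀ N₁ (pw k) f)

def dJ (N₀ N₁ : E → ℝ≥0∞) (q : ℝ≥0∞) (w : ℤ → ℝ) (n : ℤ) (f : E) : ℝ≥0∞ :=
  lq q ((Ici n).indicator fun k => ENNReal.ofReal (w k) * Kf N₀ N₁ (pw k) f)

def dR (N₀ N₁ : E → ℝ≥0∞) (r q : ℝ≥0∞) (v w : ℤ → ℝ) (f : E) : ℝ≥0∞ :=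
  lq r (fun k => ENNReal.ofReal (v k) * dJ N₀ N₁ q w k f)

variable (E) in
lemma normK_disc {b : ℝ → ℝ} (hb : RDC b) {q : ℝ≥0∞} (hq : 0 < q) (θ : ℝ) :
    ∃ C : ℝ≥0∞, C ≠ ∞ ∧ ∀ (N₀ N₁ : E → ℝ≥0∞) (f : E),
      normK N₀ N₁ θ q b f ≤ C * dK N₀ N₁ q (fun k => pw (-(k * θ)) * b (pw k)) f ∧
      dK N₀ N₁ q (fun k => pw (-(k * θ)) * b (pw k)) f ≤ C * normK N₀ N₁ θ q b f := by
  obtain ⟨C, hC, h⟩ := disc hb hq θ (C' := 2) (by simp)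
  refine ⟨C, hC, fun N₀ N₁ f => ?_⟩
  have := h _ _ (Kf_DC N₀ N₁ f) univ
  rw [SS_univ, indicator_univ] at this
  exact this

variable (E) in
lemma normR_disc {a b : ℝ → ℝ} (ha : SlowlyVarying a) (hb : RDC (fun t => b t / a t)) {r q : ℝ≥0∞} (hr : 0 < r)
    (hq : 0 < q) (σ : ℝ) :
    ∃ C : ℝ≥0∞, C ≠ ∞ ∧ ∀ (N₀ N₁ : E → ℝ≥0∞) (f : E),
      normR N₀ N₁ σ r q b a f ≤
        C * dR N₀ N₁ r q (fun k => b (pw k) / a (pw k)) (fun k => pw (-(k * σ)) * a (pw k)) f ∧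
      dR N₀ N₁ r q (fun k => b (pw k) / a (pw k)) (fun k => pw (-(k * σ)) * a (pw k)) f ≤
        C * normR N₀ N₁ σ r q b a f := by
  obtain ⟨C, hC, h⟩ := disc (SV_RDC ha) hq σ (C' := 2) (by simp)
  obtain ⟨A, hA, hstep⟩ := (SV_SVs ha).step
  -- step constant
  set D : ℝ≥0∞ := ENNReal.ofReal (pw σ * A) with hD
  have hx : ∀ (N₀ N₁ : E → ℝ≥0∞) (f : E) (j : ℤ),
      ENNReal.ofReal (pw (-(j * σ)) * a (pw j)) * Kf N₀ N₁ (pw j) f ≤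
        D * (ENNReal.ofReal (pw (-((j + 1 : ℤ) * σ)) * a (pw (j + 1 : ℤ))) * Kf N₀ N₁ (pw (j + 1 : ℤ)) f) := by
    intro N₀ N₁ f j
    rw [← mul_assoc, hD, ← ENNReal.ofReal_mul (mul_pos (pw_pos _) hA).le]
    refine mul_le_mul' (ENNReal.ofReal_le_ofReal ?_) (Kf_mono _ _ (pw_mono (by push_cast; linarith)) f)
    have h1 := (hstep j).1
    have h2 : pw (-(j * σ)) = pw σ * pw (-((j + 1 : ℤ) * σ)) := by
      rw [← pw_add]; congr 1; push_cast; ring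
    rw [h2]
    have := pw_pos σ
    have := pw_pos (-((j + 1 : ℤ) * σ))
    calc pw σ * pw (-((j + 1 : ℤ) * σ)) * a (pw j) ≤ pw σ * pw (-((j + 1 : ℤ) * σ)) * (A * a (pw (j + 1 : ℤ))) := by gcongr
      _ = _ := by ring
  have hDC : ∀ (N₀ N₁ : E → ℝ≥0∞) (f : E), DC (C + D * C)
      (fun t => LqNorm q (Ioi t) fun u => ENNReal.ofReal (u ^ (-σ - q⁻¹.toReal) * a u) * Kf N₀ N₁ u f)
      (fun k => dJ N₀ N₁ q (fun k => pw (-(k * σ)) * a (pw k)) k f) := by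
    intro N₀ N₁ f k u hu
    have h0 := h _ _ (Kf_DC N₀ N₁ f)
    have hk := h0 (Ici k)
    have hk1 := h0 (Ici (k + 1))
    rw [SS_Ici, ← Lq_Ioi_eq] at hk hk1
    constructor
    · refine (Lq_mono_set q (Ioi_subset_Ioi hu.1) _).trans (hk.1.trans ?_)
      exact mul_le_mul_left le_self_add _
    · refine (lq_ind_Ici hq (hx N₀ N₁ f) k).trans ?_
      calc _ ≤ D * (C * LqNorm q (Ioi (pw (k + 1 : ℤ))) _) := by gcongr; exact hk1.2
        _ ≤ D * (C * LqNorm q (Ioi u) fun u => ENNReal.ofReal (u ^ (-σ - q⁻¹.toReal) * a u) * Kf N₀ N₁ u f) := by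
          gcongr
          exact Lq_mono_set q (Ioi_subset_Ioi (by push_cast; exact hu.2.le)) _
        _ ≤ _ := by rw [← mul_assoc]; exact mul_le_mul_left le_add_self _
  have hCD : C + D * C ≠ ∞ := ENNReal.add_ne_top.2 ⟨hC, ENNReal.mul_ne_top (by simp [hD]) hC⟩
  obtain ⟨C2, hC2, h2⟩ := disc hb hr 0 hCD
  refine ⟨C2, hC2, fun N₀ N₁ f => ?_⟩
  have := h2 _ _ (hDC N₀ N₁ f) univ
  rw [SS_univ, indicator_univ] at this
  simp only [mul_zero, neg_zero, pw_zero, one_mul, zero_sub] at this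
  exact this
end

lemma B_prop {d : ℝ → ℝ} (hd : RDC d) (hds : SVs fun k => d (pw k)) {q : ℝ≥0∞} (hq : 0 < q)
    (hfin : LqNorm q (Ioo 0 1) (svWgt q d) ≠ ∞) :
    RDC (fun t => (LqNorm q (Ioo 0 t) (svWgt q d)).toReal) ∧
    SVs (fun k => (LqNorm q (Ioo 0 (pw k)) (svWgt q d)).toReal) ∧
    ∃ C : ℝ≥0∞, C ≠ ∞ ∧ ∀ k : ℤ,
      lq q ((Iio k).indicator fun j => ENNReal.ofReal (d (pw j))) ≤
        C * ENNReal.ofReal (LqNorm q (Ioo 0 (pw k)) (svWgt q d)).toReal ∧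
      ENNReal.ofReal (LqNorm q (Ioo 0 (pw k)) (svWgt q d)).toReal ≤
        C * lq q ((Iio k).indicator fun j => ENNReal.ofReal (d (pw j))) := by
  obtain ⟨C, hC, h⟩ := disc hd hq 0 (C' := 1) (by simp)
  have h0 : ∀ k : ℤ, LqNorm q (Ioo 0 (pw k)) (svWgt q d) ≤
        C * lq q ((Iio k).indicator fun j => ENNReal.ofReal (d (pw j))) ∧
      lq q ((Iio k).indicator fun j => ENNReal.ofReal (d (pw j))) ≤
        C * LqNorm q (Ioo 0 (pw k)) (svWgt q d) := by
    intro k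
    have := h (fun _ => 1) (fun _ => 1) (fun _ _ _ => by simp) (Iio k)
    rw [SS_Iio] at this
    simp only [mul_zero, neg_zero, pw_zero, one_mul, zero_sub, mul_one] at this
    exact this
  clear h
  set B : ℝ → ℝ≥0∞ := fun t => LqNorm q (Ioo 0 t) (svWgt q d) with hB
  set L : ℤ → ℝ≥0∞ := fun k => lq q ((Iio k).indicator fun j => ENNReal.ofReal (d (pw j))) with hL
  change ∀ k : ℤ, B (pw k) ≤ C * L k ∧ L k ≤ C * B (pw k) at h0
  have hgr : ∀ ε : ℝ, 0 < ε → ∃ A : ℝ, 0 < A ∧ ∀ (k m : ℤ), 0 ≤ m →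
      L (k + m) ≤ ENNReal.ofReal (A * pw (ε * m)) * L k := by
    intro ε hε
    obtain ⟨A, hA, hAg⟩ := hds.2 ε hε
    refine ⟨A, hA, fun k m hm => lq_ind_Iio hq m (fun j => ?_) k⟩
    rw [← ENNReal.ofReal_mul (mul_pos hA (pw_pos _)).le]
    apply ENNReal.ofReal_le_ofReal
    have := hAg (j + m) j
    push_cast at this ⊢
    rwa [add_sub_cancel_left, abs_of_nonneg (by exact_mod_cast hm)] at this
  have hLpos : ∀ k, L k ≠ 0 := by
    intro k h
    have h1 := le_lq hq ((Iio k).indicator fun j => ENNReal.ofReal (d (pw j))) (k - 1)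
    rw [show lq q ((Iio k).indicator fun j => ENNReal.ofReal (d (pw j))) = 0 from h] at h1
    simp only [mem_Iio, sub_lt_self_iff, zero_lt_one, indicator_of_mem, nonpos_iff_eq_zero,
      ENNReal.ofReal_eq_zero] at h1
    exact absurd h1 (not_le.2 (hds.1 _))
  have hLmono : ∀ {k l : ℤ}, k ≤ l → L k ≤ L l := by
    intro k l hkl
    refine lq_mono q fun j => ?_
    exact indicator_le_indicator_of_subset (Iio_subset_Iio hkl) (fun _ => by simp) j
  have hLfin : ∀ k, L k ≠ ∞ := by
    have hz : L 0 ≠ ∞ := by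
      refine ne_top_of_le_ne_top (ENNReal.mul_ne_top hC ?_) (h0 0).2
      simpa [hB, pw_zero] using hfin
    intro k
    obtain ⟨A, hA, hAg⟩ := hgr 1 one_pos
    refine ne_top_of_le_ne_top ?_ ((hLmono (le_max_left k 0)).trans ?_) (b := ENNReal.ofReal (A * pw (1 * (max k 0 : ℤ))) * L 0)
    · exact ENNReal.mul_ne_top (by simp) hz
    · have := hAg 0 (max k 0) (le_max_right _ _)
      rwa [zero_add] at this
  have hBfin : ∀ k : ℤ, B (pw k) ≠ ∞ := fun k =>
    ne_top_of_le_ne_top (ENNReal.mul_ne_top hC (hLfin k)) (h0 k).1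
  have hBpos : ∀ k : ℤ, B (pw k) ≠ 0 := by
    intro k h
    have := (h0 k).2
    rw [h, mul_zero] at this
    exact hLpos k (le_zero_iff.1 this)
  have hBmono : ∀ {s t : ℝ}, s ≤ t → B s ≤ B t := fun h => Lq_mono_set q (Ioo_subset_Ioo_right h) _
  have hBfin' : ∀ t : ℝ, 0 < t → B t ≠ ∞ := by
    intro t ht
    obtain ⟨k, hk⟩ := exists_Dy ht
    refine ne_top_of_le_ne_top (hBfin (k + 1)) (hBmono ?_)
    push_cast
    exact hk.2.le
  have hBpos' : ∀ t : ℝ, 0 < t → B t ≠ 0 := by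
    intro t ht h
    obtain ⟨k, hk⟩ := exists_Dy ht
    have := hBmono hk.1
    rw [h] at this
    exact hBpos k (le_zero_iff.1 this)
  have hBgr : ∀ ε : ℝ, 0 < ε → ∃ A : ℝ, 0 < A ∧ ∀ (k m : ℤ), 0 ≤ m →
      (B (pw (k + m : ℤ))).toReal ≤ A * pw (ε * m) * (B (pw k)).toReal := by
    intro ε hε
    obtain ⟨A, hA, hAg⟩ := hgr ε hε
    refine ⟨(C.toReal * C.toReal + 1) * A, by positivity, fun k m hm => ?_⟩
    have e1 : B (pw (k + m : ℤ)) ≤ C * (ENNReal.ofReal (A * pw (ε * m)) * (C * B (pw k))) := by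
      refine (h0 _).1.trans ?_
      gcongr
      refine (hAg k m hm).trans ?_
      gcongr
      exact (h0 k).2
    have e2 := ENNReal.toReal_mono (ENNReal.mul_ne_top hC (ENNReal.mul_ne_top (by simp) (ENNReal.mul_ne_top hC (hBfin k)))) e1
    have := pw_pos (ε * m)
    rw [ENNReal.toReal_mul, ENNReal.toReal_mul, ENNReal.toReal_mul, ENNReal.toReal_ofReal (by positivity)] at e2
    refine e2.trans ?_
    have : 0 ≤ A * pw (ε * m) * (B (pw k)).toReal := by positivity
    nlinarith
  refine ⟨⟨fun u hu => ENNReal.toReal_pos (hBpos' u hu) (hBfin' u hu), ?_⟩,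
    ⟨fun k => ENNReal.toReal_pos (hBpos k) (hBfin k), ?_⟩, C, hC, fun k => ?_⟩
  · obtain ⟨A, hA, hAg⟩ := hBgr 1 one_pos
    refine ⟨A * 2 + 1, by positivity, fun k u hu => ?_⟩
    have n1 : 0 ≤ (B (pw k)).toReal := ENNReal.toReal_nonneg
    have n2 : 0 ≤ (B u).toReal := ENNReal.toReal_nonneg
    constructor
    · have e1 : (B u).toReal ≤ (B (pw (k + 1 : ℤ))).toReal :=
        ENNReal.toReal_mono (hBfin _) (hBmono (by push_cast; exact hu.2.le))
      have e2 := hAg k 1 (by norm_num)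
      rw [Int.cast_one, mul_one, pw_one] at e2
      change (B u).toReal ≤ (A * 2 + 1) * (B (pw k)).toReal
      nlinarith
    · have e1 : (B (pw k)).toReal ≤ (B u).toReal :=
        ENNReal.toReal_mono (hBfin' u (Dy_pos hu)) (hBmono hu.1)
      change (B (pw k)).toReal ≤ (A * 2 + 1) * (B u).toReal
      nlinarith
  · intro ε hε
    obtain ⟨A, hA, hAg⟩ := hBgr ε hε
    refine ⟨A + 1, by positivity, fun j k => ?_⟩
    change (B (pw j)).toReal ≤ (A + 1) * pw (ε * |(j:ℝ) - k|) * (B (pw k)).toReal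
    have n1 : 0 ≤ (B (pw k)).toReal := ENNReal.toReal_nonneg
    have n3 : 1 ≤ pw (ε * |(j:ℝ) - k|) := by
      rw [← pw_zero]; exact pw_mono (by positivity)
    rcases le_total k j with hkj | hkj
    · have := hAg k (j - k) (by omega)
      rw [add_sub_cancel] at this
      push_cast at this
      have hkj' : (k:ℝ) ≤ j := by exact_mod_cast hkj
      rw [abs_of_nonneg (by linarith)] at n3 ⊢
      refine this.trans ?_
      gcongr
      linarith
    · have e1 : (B (pw j)).toReal ≤ (B (pw k)).toReal :=
        ENNReal.toReal_mono (hBfin k) (hBmono (pw_mono (by exact_mod_cast hkj)))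
      refine e1.trans (le_mul_of_one_le_left n1 ?_)
      nlinarith
  · rw [ENNReal.ofReal_toReal (hBfin k)]
    exact ⟨(h0 k).2, (h0 k).1⟩

lemma om {a b : ℝ} (h : a ≤ b) (x : ℝ≥0∞) : ENNReal.ofReal a * x ≤ ENNReal.ofReal b * x :=
  mul_le_mul_left (ENNReal.ofReal_le_ofReal h) _

section QB
variable {E : Type*} [AddCommGroup E] [Module ℝ E]

lemma N_neg (A : QuasiBanach E) (x : E) : A.N (-x) = A.N x := by
  have := A.smul (-1) x
  simpa using this

lemma Kf_le_left (A₀ A₁ : QuasiBanach E) (t : ℝ) (g : E) : Kf A₀.N A₁.N t g ≤ A₀.N g := by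
  refine (iInf_le _ g).trans ?_
  simp [A₁.zero]

lemma Kf_le_right (A₀ A₁ : QuasiBanach E) (t : ℝ) (g : E) :
    Kf A₀.N A₁.N t g ≤ ENNReal.ofReal t * A₁.N g := by
  refine (iInf_le _ 0).trans ?_
  simp [A₀.zero]

lemma Kf_neg (A₀ A₁ : QuasiBanach E) (t : ℝ) (g : E) :
    Kf A₀.N A₁.N t (-g) ≤ Kf A₀.N A₁.N t g := by
  refine le_iInf fun x => (iInf_le _ (-x)).trans ?_
  rw [N_neg, show -g - -x = -(g - x) by abel, N_neg]

lemma Kf_add (A₀ A₁ : QuasiBanach E) : ∃ C : ℝ≥0∞, C ≠ ∞ ∧ ∀ (t : ℝ) (f g : E),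
    Kf A₀.N A₁.N t (f + g) ≤ C * (Kf A₀.N A₁.N t f + Kf A₀.N A₁.N t g) := by
  obtain ⟨C, h1, hC, h⟩ := A₀.quasi
  obtain ⟨D, h2, hD, h'⟩ := A₁.quasi
  have hCD : C + D ≠ ∞ := ENNReal.add_ne_top.2 ⟨hC, hD⟩
  have hCD0 : C + D ≠ 0 := (lt_of_lt_of_le one_pos (h1.trans le_self_add)).ne'
  refine ⟨C + D, hCD, fun t f g => ?_⟩
  unfold Kf
  rw [ENNReal.iInf_add, ENNReal.mul_iInf_of_ne hCD0 hCD]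
  refine le_iInf fun x => ?_
  rw [ENNReal.add_iInf, ENNReal.mul_iInf_of_ne hCD0 hCD]
  refine le_iInf fun y => (iInf_le _ (x + y)).trans ?_
  rw [show f + g - (x + y) = (f - x) + (g - y) by abel]
  calc A₀.N (x + y) + ENNReal.ofReal t * A₁.N (f - x + (g - y))
      ≤ (C + D) * (A₀.N x + A₀.N y) + ENNReal.ofReal t * ((C + D) * (A₁.N (f - x) + A₁.N (g - y))) := by
        gcongr
        · exact (h _ _).trans (mul_le_mul_left le_self_add _)
        · exact (h' _ _).trans (mul_le_mul_left le_add_self _)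
    _ = _ := by ring

lemma Kf_sub (A₀ A₁ : QuasiBanach E) : ∃ C : ℝ≥0∞, C ≠ ∞ ∧
    (∀ (t : ℝ) (f g : E), Kf A₀.N A₁.N t f ≤ C * (Kf A₀.N A₁.N t g + Kf A₀.N A₁.N t (f - g))) ∧
    (∀ (t : ℝ) (f g : E), Kf A₀.N A₁.N t (f - g) ≤ C * (Kf A₀.N A₁.N t f + Kf A₀.N A₁.N t g)) := by
  obtain ⟨C, hC, h⟩ := Kf_add A₀ A₁
  refine ⟨C, hC, fun t f g => ?_, fun t f g => ?_⟩
  · have := h t g (f - g)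
    rwa [add_sub_cancel] at this
  · rw [sub_eq_add_neg]
    refine (h t f (-g)).trans ?_
    gcongr
    exact Kf_neg _ _ _ _

end QB

lemma HA {E : Type*} [AddCommGroup E] (N₀ N₁ : E → ℝ≥0∞) {r₀ q₀ : ℝ≥0∞} (hr₀ : 0 < r₀) (hq₀ : 0 < q₀)
    {β B : ℤ → ℝ} (w : ℤ → ℝ) {CB : ℝ≥0∞}
    (hB : ∀ k : ℤ, ENNReal.ofReal (B k) ≤ CB * lq r₀ ((Iio k).indicator fun j => ENNReal.ofReal (β j)))
    (n : ℤ) (g : E) :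
    ENNReal.ofReal (B n) * (ENNReal.ofReal (w n) * Kf N₀ N₁ (pw n) g) ≤ CB * dR N₀ N₁ r₀ q₀ β w g := by
  set x := ENNReal.ofReal (w n) * Kf N₀ N₁ (pw n) g with hx
  calc ENNReal.ofReal (B n) * x ≤ CB * lq r₀ ((Iio n).indicator fun j => ENNReal.ofReal (β j)) * x := by
        gcongr; exact hB n
    _ = CB * (x * lq r₀ ((Iio n).indicator fun j => ENNReal.ofReal (β j))) := by ring
    _ ≤ CB * dR N₀ N₁ r₀ q₀ β w g := by
        gcongr
        rw [← lq_const_mul hr₀]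
        refine lq_mono _ fun k => ?_
        by_cases hk : k < n
        · simp only [indicator, mem_Iio, hk, if_true]
          rw [mul_comm]
          gcongr
          refine le_trans (le_of_eq ?_) (le_lq hq₀ _ n)
          simp [indicator, hk.le, hx]
        · simp [indicator, hk]

lemma HB {r₀ q₀ : ℝ≥0∞} (hr₀ : 0 < r₀) (hq₀ : 0 < q₀)
    {β B : ℤ → ℝ} (hβ : SVs β) (hBs : SVs B) {CB : ℝ≥0∞} (hCB : CB ≠ ∞)
    (hB : ∀ k : ℤ, lq r₀ ((Iio k).indicator fun j => ENNReal.ofReal (β j)) ≤ CB * ENNReal.ofReal (B k))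
    {ε : ℝ} (hε : 0 < ε) :
    ∃ C : ℝ≥0∞, C ≠ ∞ ∧ ∀ (n : ℤ) (y : ℤ → ℝ≥0∞) (T : ℝ≥0∞),
      (∀ j : ℤ, y j ≤ ENNReal.ofReal ((B j)⁻¹ * pw (-(ε * |(n:ℝ) - j|))) * T) →
      lq r₀ (fun k => ENNReal.ofReal (β k) * lq q₀ ((Ici k).indicator y)) ≤ C * T := by
  obtain ⟨C1, hC1, h1⟩ := hBs.inv.2 (ε / 2) (by linarith)
  obtain ⟨Cg, hCg, hg⟩ := lq_geom hq₀ (s := ε / 4) (by linarith)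
  obtain ⟨C2, hC2, h2⟩ := hβ.2 (ε / 8) (by linarith)
  obtain ⟨Cg', hCg', hg'⟩ := lq_geom hr₀ (s := ε / 8) (by linarith)
  obtain ⟨Ca, hCa, ha⟩ := lq_add hr₀
  obtain ⟨A, hA, hstep⟩ := hβ.step
  have hβB : ∀ n : ℤ, ENNReal.ofReal (β n) ≤ ENNReal.ofReal A * (CB * ENNReal.ofReal (B n)) := by
    intro n
    have e1 := (hstep (n - 1)).2
    rw [sub_add_cancel] at e1
    refine (ENNReal.ofReal_le_ofReal e1).trans ?_
    rw [ENNReal.ofReal_mul hA.le]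
    gcongr
    refine le_trans ?_ (hB n)
    refine le_trans (le_of_eq ?_) (le_lq hr₀ _ (n - 1))
    simp [indicator]
  refine ⟨ENNReal.ofReal C1 * Cg * (Ca * (CB + ENNReal.ofReal C2 * (ENNReal.ofReal A * CB) * Cg')), ?_, ?_⟩
  · have t1 : ∀ x : ℝ, ENNReal.ofReal x ≠ ∞ := fun x => by simp
    exact ENNReal.mul_ne_top (ENNReal.mul_ne_top (t1 _) hCg) (ENNReal.mul_ne_top hCa
      (ENNReal.add_ne_top.2 ⟨hCB, ENNReal.mul_ne_top (ENNReal.mul_ne_top (t1 _)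
        (ENNReal.mul_ne_top (t1 _) hCB)) hCg'⟩))
  intro n y T hy
  have hBn : 0 < (B n)⁻¹ := hBs.inv.1 n
  set m : ℤ → ℝ := fun k => if k < n then 1 else pw (-(ε / 4 * |(n:ℝ) - k|)) with hm
  have hm0 : ∀ k, 0 ≤ m k := by
    intro k; simp only [hm]; split_ifs; exacts [zero_le_one, (pw_pos _).le]
  have inner : ∀ k : ℤ, lq q₀ ((Ici k).indicator y) ≤
      (ENNReal.ofReal (C1 * (B n)⁻¹) * T * ENNReal.ofReal (m k)) * Cg := by
    intro k
    refine (lq_le_mul hq₀ (c := ENNReal.ofReal (C1 * (B n)⁻¹) * T * ENNReal.ofReal (m k))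
      (y := fun j => ENNReal.ofReal (pw (-(ε / 4 * |(n:ℝ) - j|)))) fun j => ?_).trans ?_
    · by_cases hj : k ≤ j
      · simp only [indicator, mem_Ici, hj, if_true]
        refine (hy j).trans ?_
        have key : (B j)⁻¹ * pw (-(ε * |(n:ℝ) - j|)) ≤
            (C1 * (B n)⁻¹) * (m k * pw (-(ε / 4 * |(n:ℝ) - j|))) := by
          have e1 := h1 j n
          rw [abs_sub_comm] at e1
          have e2 : pw (-(ε / 2 * |(n:ℝ) - j|)) ≤ m k * pw (-(ε / 4 * |(n:ℝ) - j|)) := by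
            simp only [hm]
            split_ifs with hk
            · rw [one_mul]; apply pw_mono; have := abs_nonneg ((n:ℝ) - j); nlinarith
            · rw [← pw_add]
              apply pw_mono
              have h3 : (n:ℝ) ≤ k := by exact_mod_cast (not_lt.1 hk)
              have h4 : (k:ℝ) ≤ j := by exact_mod_cast hj
              rw [abs_sub_comm, abs_of_nonneg (by linarith : (0:ℝ) ≤ j - n), abs_sub_comm,
                abs_of_nonneg (by linarith : (0:ℝ) ≤ k - n)]
              nlinarith
          have e3 : pw (-(ε * |(n:ℝ) - j|)) = pw (-(ε / 2 * |(n:ℝ) - j|)) * pw (-(ε / 2 * |(n:ℝ) - j|)) := by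
            rw [← pw_add]; congr 1; ring
          have e4 : pw (ε / 2 * |(n:ℝ) - j|) * pw (-(ε / 2 * |(n:ℝ) - j|)) = 1 := by
            rw [← pw_add, ← pw_zero]; congr 1; ring
          have p1 := pw_pos (-(ε / 2 * |(n:ℝ) - j|))
          calc (B j)⁻¹ * pw (-(ε * |(n:ℝ) - j|)) ≤ (C1 * pw (ε / 2 * |(n:ℝ) - j|) * (B n)⁻¹) * pw (-(ε * |(n:ℝ) - j|)) :=
                mul_le_mul_of_nonneg_right e1 (pw_pos _).le
            _ = (C1 * (B n)⁻¹) * (pw (ε / 2 * |(n:ℝ) - j|) * pw (-(ε / 2 * |(n:ℝ) - j|))) * pw (-(ε / 2 * |(n:ℝ) - j|)) := by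
                rw [e3]; ring
            _ = (C1 * (B n)⁻¹) * pw (-(ε / 2 * |(n:ℝ) - j|)) := by rw [e4, mul_one]
            _ ≤ _ := by gcongr
        refine (om key T).trans (le_of_eq ?_)
        rw [ENNReal.ofReal_mul (by positivity), ENNReal.ofReal_mul (hm0 k)]
        ring
      · simp [indicator, hj]
    · gcongr
      exact hg n
  have outer : ∀ k : ℤ, ENNReal.ofReal (β k) * lq q₀ ((Ici k).indicator y) ≤
      (ENNReal.ofReal (C1 * (B n)⁻¹) * T * Cg) * ((Iio n).indicator (fun j => ENNReal.ofReal (β j)) k +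
        ENNReal.ofReal (C2 * β n) * ENNReal.ofReal (pw (-(ε / 8 * |(n:ℝ) - k|)))) := by
    intro k
    calc ENNReal.ofReal (β k) * lq q₀ ((Ici k).indicator y) ≤
        ENNReal.ofReal (β k) * ((ENNReal.ofReal (C1 * (B n)⁻¹) * T * ENNReal.ofReal (m k)) * Cg) := by
          gcongr; exact inner k
      _ = (ENNReal.ofReal (C1 * (B n)⁻¹) * T * Cg) * (ENNReal.ofReal (β k) * ENNReal.ofReal (m k)) := by ring
      _ ≤ _ := by
        gcongr
        by_cases hk : k < n
        · simp [indicator, hk, hm]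
        · simp only [indicator, mem_Iio, hk, if_false, zero_add, hm]
          have hb := hβ.1 n
          rw [← ENNReal.ofReal_mul (hβ.1 k).le, ← ENNReal.ofReal_mul (by positivity)]
          apply ENNReal.ofReal_le_ofReal
          have e1 := h2 k n
          rw [abs_sub_comm] at e1
          calc β k * pw (-(ε / 4 * |(n:ℝ) - k|)) ≤ (C2 * pw (ε / 8 * |(n:ℝ) - k|) * β n) * pw (-(ε / 4 * |(n:ℝ) - k|)) :=
                mul_le_mul_of_nonneg_right e1 (pw_pos _).le
            _ = C2 * β n * (pw (ε / 8 * |(n:ℝ) - k|) * pw (-(ε / 4 * |(n:ℝ) - k|))) := by ring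
            _ = _ := by rw [← pw_add]; congr 2; ring
  refine (lq_le_mul hr₀ outer).trans ?_
  have hBB : ENNReal.ofReal (B n)⁻¹ * ENNReal.ofReal (B n) = 1 := by
    rw [← ENNReal.ofReal_mul hBn.le, inv_mul_cancel₀ (hBs.1 n).ne', ENNReal.ofReal_one]
  calc _ ≤ (ENNReal.ofReal (C1 * (B n)⁻¹) * T * Cg) * (Ca * (CB * ENNReal.ofReal (B n) +
        ENNReal.ofReal C2 * (ENNReal.ofReal A * (CB * ENNReal.ofReal (B n))) * Cg')) := by
        gcongr
        refine (ha _ _).trans ?_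
        gcongr
        · exact hB n
        · rw [lq_const_mul hr₀, ENNReal.ofReal_mul hC2.le]
          gcongr
          · exact hβB n
          · exact hg' n
    _ = (ENNReal.ofReal (B n)⁻¹ * ENNReal.ofReal (B n)) * (ENNReal.ofReal C1 * Cg * (Ca * (CB + ENNReal.ofReal C2 * (ENNReal.ofReal A * CB) * Cg')) * T) := by
        rw [ENNReal.ofReal_mul hC1.le]; ring
    _ = _ := by rw [hBB, one_mul]

lemma rho_dec {ρ V : ℤ → ℝ} (hV : SVs V) {δ : ℝ} (hδ : 0 < δ) (hρ : ∀ j : ℤ, ρ j = pw (j * δ) * V j) :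
    ∃ C : ℝ, 0 < C ∧ ∀ n j : ℤ, n ≤ j → (ρ j)⁻¹ ≤ C * (ρ n)⁻¹ * pw (-(δ / 2 * |(n:ℝ) - j|)) := by
  obtain ⟨C, hC, h⟩ := hV.inv.2 (δ / 2) (by linarith)
  refine ⟨C, hC, fun n j hnj => ?_⟩
  have hnj' : (n:ℝ) ≤ j := by exact_mod_cast hnj
  have h1 := h j n
  rw [abs_of_nonneg (by linarith)] at h1
  rw [hρ, hρ, mul_inv, mul_inv, ← pw_neg, ← pw_neg, abs_sub_comm, abs_of_nonneg (by linarith)]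
  calc pw (-(j * δ)) * (V j)⁻¹ ≤ pw (-(j * δ)) * (C * pw (δ / 2 * (j - n)) * (V n)⁻¹) :=
        mul_le_mul_of_nonneg_left h1 (pw_pos _).le
    _ = C * (V n)⁻¹ * (pw (-(j * δ)) * pw (δ / 2 * (j - n))) := by ring
    _ = C * (V n)⁻¹ * (pw (-(n * δ)) * pw (-(δ / 2 * (j - n)))) := by
        rw [← pw_add, ← pw_add]; congr 2; ring
    _ = _ := by ring

lemma w_dec {c : ℤ → ℝ} (hc : SVs c) {θ ε : ℝ} (hε : 0 < ε) (h1 : 2 * ε ≤ θ) (h2 : 2 * ε ≤ 1 - θ) :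
    ∃ C : ℝ, 0 < C ∧ ∀ n j : ℤ,
      (j ≤ n → (pw (-(j * θ)) * c j) * pw (j - n) ≤ C * pw (-(ε * |(n:ℝ) - j|)) * (pw (-(n * θ)) * c n)) ∧
      (n ≤ j → pw (-(j * θ)) * c j ≤ C * pw (-(ε * |(n:ℝ) - j|)) * (pw (-(n * θ)) * c n)) := by
  obtain ⟨C, hC, h⟩ := hc.2 ε hε
  refine ⟨C, hC, fun n j => ⟨fun hjn => ?_, fun hnj => ?_⟩⟩
  · have hjn' : (j:ℝ) ≤ n := by exact_mod_cast hjn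
    have h3 := h j n
    rw [abs_sub_comm, abs_of_nonneg (by linarith)] at h3
    rw [abs_of_nonneg (by linarith)]
    have hcn := hc.1 n
    calc _ = (pw (-(j * θ)) * pw (j - n)) * c j := by ring
      _ ≤ (pw (-(j * θ)) * pw (j - n)) * (C * pw (ε * (n - j)) * c n) :=
          mul_le_mul_of_nonneg_left h3 (mul_pos (pw_pos _) (pw_pos _)).le
      _ = C * c n * pw (-(j * θ) + (j - n) + ε * (n - j)) := by rw [pw_add, pw_add]; ring
      _ ≤ C * c n * pw (-(ε * (n - j)) + -(n * θ)) := by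
          gcongr
          apply pw_mono
          nlinarith
      _ = _ := by rw [pw_add]; ring
  · have hjn' : (n:ℝ) ≤ j := by exact_mod_cast hnj
    have h3 := h j n
    rw [abs_of_nonneg (by linarith)] at h3
    rw [abs_sub_comm, abs_of_nonneg (by linarith)]
    have hcn := hc.1 n
    calc _ ≤ pw (-(j * θ)) * (C * pw (ε * (j - n)) * c n) :=
          mul_le_mul_of_nonneg_left h3 (pw_pos _).le
      _ = C * c n * pw (-(j * θ) + ε * (j - n)) := by rw [pw_add]; ring
      _ ≤ C * c n * pw (-(ε * (j - n)) + -(n * θ)) := by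
          gcongr
          apply pw_mono
          nlinarith
      _ = _ := by rw [pw_add]; ring

section QB
variable {E : Type*} [AddCommGroup E] [Module ℝ E]

/-- lower Holmstedt estimate -/
lemma HC (A₀ A₁ : QuasiBanach E) {r₀ q₀ r₁ : ℝ≥0∞} (hr₀ : 0 < r₀) (hq₀ : 0 < q₀) (hr₁ : 0 < r₁)
    {β B w₀ w₁ ρ V : ℤ → ℝ} {CB : ℝ≥0∞} (hCB : CB ≠ ∞)
    (hB : ∀ k : ℤ, ENNReal.ofReal (B k) ≤ CB * lq r₀ ((Iio k).indicator fun j => ENNReal.ofReal (β j)))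
    (hV : SVs V) {δ : ℝ} (hδ : 0 < δ) (hρ : ∀ j : ℤ, ρ j = pw (j * δ) * V j)
    (hBs : ∀ j, 0 < B j) (hw : ∀ j, w₁ j = (ρ j)⁻¹ * (B j * w₀ j)) :
    ∃ C : ℝ≥0∞, C ≠ ∞ ∧ ∀ (n : ℤ) (f : E),
      ENNReal.ofReal (ρ n) * dJ A₀.N A₁.N r₁ w₁ n f ≤
        C * Kf (dR A₀.N A₁.N r₀ q₀ β w₀) (dK A₀.N A₁.N r₁ w₁) (ρ n) f := by
  obtain ⟨CK, hCK, hK, -⟩ := Kf_sub A₀ A₁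
  obtain ⟨Ca, hCa, ha⟩ := lq_add hr₁
  obtain ⟨C1, hC1, h1⟩ := rho_dec hV hδ hρ
  obtain ⟨Cg, hCg, hg⟩ := lq_geom hr₁ (s := δ / 2) (by linarith)
  have ρpos : ∀ j, 0 < ρ j := fun j => by rw [hρ]; exact mul_pos (pw_pos _) (hV.1 j)
  set D : ℝ≥0∞ := ENNReal.ofReal C1 * CB * Cg + 1 with hD
  have hDt : D ≠ ∞ := ENNReal.add_ne_top.2 ⟨ENNReal.mul_ne_top (ENNReal.mul_ne_top (by simp) hCB) hCg, by simp⟩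
  have hC : CK * Ca * D ≠ ∞ := ENNReal.mul_ne_top (ENNReal.mul_ne_top hCK hCa) hDt
  have hC' : CK * Ca * D + 1 ≠ ∞ := ENNReal.add_ne_top.2 ⟨hC, by simp⟩
  refine ⟨CK * Ca * D + 1, hC', fun n f => ?_⟩
  unfold Kf
  rw [ENNReal.mul_iInf_of_ne (by simp) hC']
  refine le_iInf fun g => ?_
  refine le_trans ?_ (mul_le_mul_left le_self_add _)
  -- split
  have s1 : dJ A₀.N A₁.N r₁ w₁ n f ≤ CK * (Ca * (dJ A₀.N A₁.N r₁ w₁ n g + dJ A₀.N A₁.N r₁ w₁ n (f - g))) := by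
    refine (lq_le_mul hr₁ (c := CK) (y := fun j => (Ici n).indicator (fun k : ℤ => ENNReal.ofReal (w₁ k) * Kf A₀.N A₁.N (pw k) g) j +
      (Ici n).indicator (fun k : ℤ => ENNReal.ofReal (w₁ k) * Kf A₀.N A₁.N (pw k) (f - g)) j) fun j => ?_).trans ?_
    · by_cases hj : n ≤ j
      · simp only [indicator, mem_Ici, hj, if_true]
        calc _ ≤ ENNReal.ofReal (w₁ j) * (CK * (Kf A₀.N A₁.N (pw j) g + Kf A₀.N A₁.N (pw j) (f - g))) := by
              gcongr; exact hK _ f g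
          _ = _ := by ring
      · simp [indicator, hj]
    · gcongr
      exact ha _ _
  have s2 : dJ A₀.N A₁.N r₁ w₁ n (f - g) ≤ dK A₀.N A₁.N r₁ w₁ (f - g) :=
    lq_mono _ fun j => indicator_le_self _ _ j
  have s3 : dJ A₀.N A₁.N r₁ w₁ n g ≤ ENNReal.ofReal (C1 * (ρ n)⁻¹) * (CB * dR A₀.N A₁.N r₀ q₀ β w₀ g) * Cg := by
    refine (lq_le_mul hr₁ (c := ENNReal.ofReal (C1 * (ρ n)⁻¹) * (CB * dR A₀.N A₁.N r₀ q₀ β w₀ g))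
      (y := fun j => ENNReal.ofReal (pw (-(δ / 2 * |(n:ℝ) - j|)))) fun j => ?_).trans ?_
    · by_cases hj : n ≤ j
      · simp only [indicator, mem_Ici, hj, if_true]
        have e1 := HA A₀.N A₁.N hr₀ hq₀ w₀ hB j g
        have p1 := ρpos n
        rw [hw, ENNReal.ofReal_mul (inv_pos.2 (ρpos j)).le, ENNReal.ofReal_mul (hBs j).le, mul_assoc, mul_assoc]
        refine (mul_le_mul' (ENNReal.ofReal_le_ofReal (h1 n j hj)) e1).trans (le_of_eq ?_)
        rw [ENNReal.ofReal_mul (by positivity)]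
        ring
      · simp [indicator, hj]
    · gcongr
      exact hg n
  have hρρ : ENNReal.ofReal (ρ n) * ENNReal.ofReal (ρ n)⁻¹ = 1 := by
    rw [← ENNReal.ofReal_mul (ρpos n).le, mul_inv_cancel₀ (ρpos n).ne', ENNReal.ofReal_one]
  calc ENNReal.ofReal (ρ n) * dJ A₀.N A₁.N r₁ w₁ n f
      ≤ ENNReal.ofReal (ρ n) * (CK * (Ca * (ENNReal.ofReal (C1 * (ρ n)⁻¹) * (CB * dR A₀.N A₁.N r₀ q₀ β w₀ g) * Cg + dK A₀.N A₁.N r₁ w₁ (f - g)))) := by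
        gcongr
        exact s1.trans (by gcongr)
    _ = CK * Ca * ((ENNReal.ofReal (ρ n) * ENNReal.ofReal (ρ n)⁻¹) * ((ENNReal.ofReal C1 * CB * Cg) * dR A₀.N A₁.N r₀ q₀ β w₀ g) + 1 * (ENNReal.ofReal (ρ n) * dK A₀.N A₁.N r₁ w₁ (f - g))) := by
        rw [ENNReal.ofReal_mul hC1.le]; ring
    _ ≤ CK * Ca * (D * dR A₀.N A₁.N r₀ q₀ β w₀ g + D * (ENNReal.ofReal (ρ n) * dK A₀.N A₁.N r₁ w₁ (f - g))) := by
        rw [hρρ, one_mul]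
        gcongr
        · exact le_self_add
        · exact le_add_self
    _ = _ := by ring

def Gn (N₀ N₁ : E → ℝ≥0∞) (ε : ℝ) (ω : ℤ → ℝ) (n : ℤ) (f : E) : ℝ≥0∞ :=
  ⨆ j : ℤ, (Iic n).indicator (fun j => ENNReal.ofReal (pw (ε * (n - j)) * ω j) * Kf N₀ N₁ (pw j) f) j

lemma lim_le {x A D K : ℝ≥0∞} (hD : D ≠ ∞) (hK : K ≠ ∞) (h : ∀ κ, K < κ → x ≤ A + D * κ) :
    x ≤ A + D * K := by
  have hne : (nhdsWithin K (Ioi K)).NeBot := nhdsGT_neBot_of_exists_gt ⟨∞, lt_top_iff_ne_top.2 hK⟩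
  have ht : Tendsto (fun κ : ℝ≥0∞ => A + D * κ) (nhdsWithin K (Ioi K)) (nhds (A + D * K)) :=
    tendsto_const_nhds.add
      (ENNReal.Tendsto.const_mul (tendsto_nhdsWithin_of_tendsto_nhds tendsto_id) (Or.inr hD))
  exact ge_of_tendsto ht (eventually_nhdsWithin_of_forall fun κ hκ => h κ hκ)

/-- upper Holmstedt estimate -/
lemma HD (A₀ A₁ : QuasiBanach E) {r₀ q₀ r₁ : ℝ≥0∞} (hr₀ : 0 < r₀) (hq₀ : 0 < q₀) (hr₁ : 0 < r₁)
    {α β B b ρ : ℤ → ℝ} {CB : ℝ≥0∞} (hCB : CB ≠ ∞)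
    (hα : SVs α) (hβ : SVs β) (hBs : SVs B) (hb : SVs b)
    (hB : ∀ k : ℤ, lq r₀ ((Iio k).indicator fun j => ENNReal.ofReal (β j)) ≤ CB * ENNReal.ofReal (B k))
    {θ₀ θ₁ ε : ℝ} (hε : 0 < ε) (e1 : 2 * ε ≤ θ₀) (e2 : 2 * ε ≤ 1 - θ₀) (e3 : 2 * ε ≤ θ₁) (e4 : 2 * ε ≤ 1 - θ₁)
    (hρ : ∀ j, 0 < ρ j) (hw : ∀ j : ℤ, ρ j * (pw (-(j * θ₁)) * b j) = pw (-(j * θ₀)) * (α j * B j)) :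
    ∃ C : ℝ≥0∞, C ≠ ∞ ∧ ∀ (n : ℤ) (f : E),
      Kf (dR A₀.N A₁.N r₀ q₀ β (fun j => pw (-(j * θ₀)) * α j)) (dK A₀.N A₁.N r₁ (fun j => pw (-(j * θ₁)) * b j)) (ρ n) f ≤
        C * (Gn A₀.N A₁.N ε (fun j => pw (-(j * θ₀)) * (α j * B j)) n f +
          ENNReal.ofReal (ρ n) * dJ A₀.N A₁.N r₁ (fun j => pw (-(j * θ₁)) * b j) n f) := by
  obtain ⟨CK, hCK, hK1, hK2⟩ := Kf_sub A₀ A₁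
  obtain ⟨Ca, hCa, ha⟩ := lq_add hr₁
  obtain ⟨Cg, hCg, hg⟩ := lq_geom hr₁ hε
  obtain ⟨C0, hC0, hX0⟩ := HB hr₀ hq₀ hβ hBs hCB hB hε
  obtain ⟨C1, hC1, hw0⟩ := w_dec (hα.mul hBs) hε e1 e2
  obtain ⟨C2, hC2, hw1⟩ := w_dec hb hε e3 e4
  set ω : ℤ → ℝ := fun j => pw (-(j * θ₀)) * (α j * B j) with hω
  set w₁ : ℤ → ℝ := fun j => pw (-(j * θ₁)) * b j with hw₁
  set w₀ : ℤ → ℝ := fun j => pw (-(j * θ₀)) * α j with hw₀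
  set X₀ := dR A₀.N A₁.N r₀ q₀ β w₀ with hX₀
  set X₁ := dK A₀.N A₁.N r₁ w₁ with hX₁
  have ωpos : ∀ j, 0 < ω j := fun j => mul_pos (pw_pos _) (mul_pos (hα.1 j) (hBs.1 j))
  have w₁pos : ∀ j, 0 < w₁ j := fun j => mul_pos (pw_pos _) (hb.1 j)
  have w₀pos : ∀ j, 0 < w₀ j := fun j => mul_pos (pw_pos _) (hα.1 j)
  have w₀ω : ∀ j, w₀ j = (B j)⁻¹ * ω j := fun j => by
    have := (hBs.1 j).ne'
    simp only [hω, hw₀]; field_simp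
  have tR : ∀ x : ℝ, ENNReal.ofReal x ≠ ∞ := fun x => by simp
  set M : ℝ≥0∞ := C0 * ((CK + 1) * (1 + ENNReal.ofReal C1)) + (CK + 1) * (Ca * (1 + ENNReal.ofReal C2 * Cg)) + 1 with hM
  have hMt : M ≠ ∞ := by
    refine ENNReal.add_ne_top.2 ⟨ENNReal.add_ne_top.2 ⟨?_, ?_⟩, by simp⟩
    · exact ENNReal.mul_ne_top hC0 (ENNReal.mul_ne_top (ENNReal.add_ne_top.2 ⟨hCK, by simp⟩)
        (ENNReal.add_ne_top.2 ⟨by simp, tR _⟩))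
    · exact ENNReal.mul_ne_top (ENNReal.add_ne_top.2 ⟨hCK, by simp⟩) (ENNReal.mul_ne_top hCa (ENNReal.add_ne_top.2 ⟨by simp, ENNReal.mul_ne_top (tR _) hCg⟩))
  refine ⟨M * 3, ENNReal.mul_ne_top hMt (by simp), fun n f => ?_⟩
  set G := Gn A₀.N A₁.N ε ω n f with hG
  set J := dJ A₀.N A₁.N r₁ w₁ n f with hJ
  have hGn : ENNReal.ofReal (ω n) * Kf A₀.N A₁.N (pw n) f ≤ G := by
    refine le_trans (le_of_eq ?_) (le_iSup _ n)
    simp [indicator, pw_zero]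
  by_cases hKn : Kf A₀.N A₁.N (pw n) f = ∞
  · rw [hKn, ENNReal.mul_top (by simpa using ωpos n)] at hGn
    rw [top_le_iff.1 hGn, top_add, ENNReal.mul_top]
    · exact le_top
    · simp [hM]
  -- main estimate for arbitrary κ
  have main : ∀ κ : ℝ≥0∞, Kf A₀.N A₁.N (pw n) f < κ →
      Kf X₀ X₁ (ρ n) f ≤ M * (G + ENNReal.ofReal (ω n) * κ) + M * (ENNReal.ofReal (ρ n) * J + ENNReal.ofReal (ω n) * κ) := by
    intro κ hκ
    obtain ⟨g, hgκ⟩ := iInf_lt_iff.1 hκ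
    have g0 : A₀.N g ≤ κ := le_self_add.trans hgκ.le
    have g1 : ENNReal.ofReal (pw n) * A₁.N (f - g) ≤ κ := le_add_self.trans hgκ.le
    have kg : ∀ j : ℤ, Kf A₀.N A₁.N (pw j) g ≤ κ := fun j => (Kf_le_left _ _ _ _).trans g0
    have kh : ∀ j : ℤ, Kf A₀.N A₁.N (pw j) (f - g) ≤ ENNReal.ofReal (pw (j - n)) * κ := by
      intro j
      refine (Kf_le_right _ _ _ _).trans ?_
      have : pw j = pw (j - n) * pw n := by rw [← pw_add]; congr 1; ring
      rw [this, ENNReal.ofReal_mul (pw_pos _).le, mul_assoc]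
      gcongr
    have kg' : ∀ j : ℤ, Kf A₀.N A₁.N (pw j) g ≤ CK * (Kf A₀.N A₁.N (pw j) f + ENNReal.ofReal (pw (j - n)) * κ) := by
      intro j
      have := hK2 (pw j) f (f - g)
      rw [show f - (f - g) = g by abel] at this
      exact this.trans (by gcongr; exact kh j)
    have kh' : ∀ j : ℤ, Kf A₀.N A₁.N (pw j) (f - g) ≤ CK * (Kf A₀.N A₁.N (pw j) f + κ) := by
      intro j
      exact (hK2 (pw j) f g).trans (by gcongr; exact kg j)
    set T := G + ENNReal.ofReal (ω n) * κ with hT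
    -- X₀ part
    have x0 : X₀ g ≤ C0 * ((CK + 1) * (1 + ENNReal.ofReal C1) * T) := by
      refine hX0 n _ _ fun j => ?_
      have Bpos : 0 < (B j)⁻¹ := inv_pos.2 (hBs.1 j)
      have pp := pw_pos (-(ε * |(n:ℝ) - j|))
      rcases le_total j n with hj | hj
      · have hj' : (j:ℝ) ≤ n := by exact_mod_cast hj
        have a1 : ENNReal.ofReal (w₀ j) * Kf A₀.N A₁.N (pw j) f ≤
            ENNReal.ofReal ((B j)⁻¹ * pw (-(ε * |(n:ℝ) - j|))) * G := by
          have : w₀ j = ((B j)⁻¹ * pw (-(ε * |(n:ℝ) - j|))) * (pw (ε * (n - j)) * ω j) := by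
            rw [w₀ω, abs_of_nonneg (by linarith)]
            have : pw (-(ε * ((n:ℝ) - j))) * pw (ε * (n - j)) = 1 := by
              rw [← pw_add, ← pw_zero]; congr 1; ring
            calc _ = (B j)⁻¹ * ω j * (pw (-(ε * ((n:ℝ) - j))) * pw (ε * (n - j))) := by rw [this, mul_one]
              _ = _ := by ring
          rw [this, ENNReal.ofReal_mul (by positivity), mul_assoc]
          gcongr
          refine le_trans (le_of_eq ?_) (le_iSup _ j)
          simp [indicator, hj]
        have a2 : ENNReal.ofReal (w₀ j) * (ENNReal.ofReal (pw (j - n)) * κ) ≤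
            ENNReal.ofReal ((B j)⁻¹ * pw (-(ε * |(n:ℝ) - j|))) * (ENNReal.ofReal C1 * (ENNReal.ofReal (ω n) * κ)) := by
          rw [← mul_assoc, ← ENNReal.ofReal_mul (w₀pos j).le, ← mul_assoc, ← mul_assoc,
            ← ENNReal.ofReal_mul (by positivity), ← ENNReal.ofReal_mul (by positivity)]
          apply om
          rw [w₀ω]
          calc (B j)⁻¹ * ω j * pw (j - n) = (B j)⁻¹ * (ω j * pw (j - n)) := by ring
            _ ≤ (B j)⁻¹ * (C1 * pw (-(ε * |(n:ℝ) - j|)) * ω n) :=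
                mul_le_mul_of_nonneg_left ((hw0 n j).1 hj) Bpos.le
            _ = _ := by ring
        calc ENNReal.ofReal (w₀ j) * Kf A₀.N A₁.N (pw j) g
            ≤ ENNReal.ofReal (w₀ j) * (CK * (Kf A₀.N A₁.N (pw j) f + ENNReal.ofReal (pw (j - n)) * κ)) := by
              gcongr; exact kg' j
          _ = CK * (ENNReal.ofReal (w₀ j) * Kf A₀.N A₁.N (pw j) f + ENNReal.ofReal (w₀ j) * (ENNReal.ofReal (pw (j - n)) * κ)) := by ring
          _ ≤ (CK + 1) * (ENNReal.ofReal ((B j)⁻¹ * pw (-(ε * |(n:ℝ) - j|))) * ((1 + ENNReal.ofReal C1) * G) +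
                ENNReal.ofReal ((B j)⁻¹ * pw (-(ε * |(n:ℝ) - j|))) * ((1 + ENNReal.ofReal C1) * (ENNReal.ofReal (ω n) * κ))) := by
              refine mul_le_mul' le_self_add (add_le_add ?_ ?_)
              · exact a1.trans (mul_le_mul' le_rfl (le_mul_of_one_le_left' le_self_add))
              · exact a2.trans (mul_le_mul' le_rfl (mul_le_mul' le_add_self le_rfl))
          _ = _ := by rw [hT]; ring
      · calc ENNReal.ofReal (w₀ j) * Kf A₀.N A₁.N (pw j) g ≤ ENNReal.ofReal (w₀ j) * κ := by gcongr; exact kg j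
          _ ≤ ENNReal.ofReal (((B j)⁻¹ * pw (-(ε * |(n:ℝ) - j|))) * (C1 * ω n)) * κ := by
              apply om
              rw [w₀ω]
              calc (B j)⁻¹ * ω j ≤ (B j)⁻¹ * (C1 * pw (-(ε * |(n:ℝ) - j|)) * ω n) :=
                    mul_le_mul_of_nonneg_left ((hw0 n j).2 hj) Bpos.le
                _ = _ := by ring
          _ = ENNReal.ofReal ((B j)⁻¹ * pw (-(ε * |(n:ℝ) - j|))) * (1 * ENNReal.ofReal C1 * (ENNReal.ofReal (ω n) * κ)) := by
              rw [ENNReal.ofReal_mul (by positivity), ENNReal.ofReal_mul hC1.le]; ring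
          _ ≤ _ := by
              gcongr
              · exact le_add_self
              · exact le_add_self
              · exact le_add_self
    have x1 : X₁ (f - g) ≤ (CK + 1) * (Ca * (J + ENNReal.ofReal (C2 * w₁ n) * κ * Cg)) := by
      have e : ∀ j : ℤ, ENNReal.ofReal (w₁ j) * Kf A₀.N A₁.N (pw j) (f - g) ≤
          (CK + 1) * ((Ici n).indicator (fun k : ℤ => ENNReal.ofReal (w₁ k) * Kf A₀.N A₁.N (pw k) f) j +
            (ENNReal.ofReal (C2 * w₁ n) * κ) * ENNReal.ofReal (pw (-(ε * |(n:ℝ) - j|)))) := by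
        intro j
        have pp := pw_pos (-(ε * |(n:ℝ) - j|))
        have pn := w₁pos n
        by_cases hj : n ≤ j
        · simp only [indicator, mem_Ici, hj, if_true]
          calc _ ≤ ENNReal.ofReal (w₁ j) * (CK * (Kf A₀.N A₁.N (pw j) f + κ)) := by gcongr; exact kh' j
            _ = CK * (ENNReal.ofReal (w₁ j) * Kf A₀.N A₁.N (pw j) f + ENNReal.ofReal (w₁ j) * κ) := by ring
            _ ≤ (CK + 1) * (ENNReal.ofReal (w₁ j) * Kf A₀.N A₁.N (pw j) f +
                ENNReal.ofReal (C2 * pw (-(ε * |(n:ℝ) - j|)) * w₁ n) * κ) := by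
                gcongr
                · exact le_self_add
                · exact (hw1 n j).2 hj
            _ = _ := by
                rw [show C2 * pw (-(ε * |(n:ℝ) - j|)) * w₁ n = (C2 * w₁ n) * pw (-(ε * |(n:ℝ) - j|)) by ring,
                  ENNReal.ofReal_mul (p := C2 * w₁ n) (q := pw (-(ε * |(n:ℝ) - j|))) (mul_pos hC2 pn).le]
                ring
        · simp only [indicator, mem_Ici, hj, if_false, zero_add]
          calc _ ≤ ENNReal.ofReal (w₁ j) * (ENNReal.ofReal (pw (j - n)) * κ) := by gcongr; exact kh j
            _ = ENNReal.ofReal (w₁ j * pw (j - n)) * κ := by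
                rw [ENNReal.ofReal_mul (w₁pos j).le]; ring
            _ ≤ ENNReal.ofReal (C2 * pw (-(ε * |(n:ℝ) - j|)) * w₁ n) * κ :=
                om ((hw1 n j).1 (by omega)) _
            _ = 1 * ((ENNReal.ofReal (C2 * w₁ n) * κ) * ENNReal.ofReal (pw (-(ε * |(n:ℝ) - j|)))) := by
                rw [show C2 * pw (-(ε * |(n:ℝ) - j|)) * w₁ n = (C2 * w₁ n) * pw (-(ε * |(n:ℝ) - j|)) by ring,
                  ENNReal.ofReal_mul (p := C2 * w₁ n) (q := pw (-(ε * |(n:ℝ) - j|))) (mul_pos hC2 pn).le]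
                ring
            _ ≤ _ := by
                gcongr
                exact le_add_self
      refine (lq_le_mul hr₁ e).trans ?_
      refine mul_le_mul' le_rfl ?_
      refine (ha _ _).trans ?_
      refine mul_le_mul' le_rfl (add_le_add le_rfl ?_)
      rw [lq_const_mul hr₁]
      exact mul_le_mul' le_rfl (hg n)
    refine (iInf_le _ g).trans (add_le_add ?_ ?_)
    · refine x0.trans ?_
      rw [← mul_assoc]
      exact mul_le_mul' (le_self_add.trans le_self_add) le_rfl
    · have hωn : ENNReal.ofReal (ω n) = ENNReal.ofReal (ρ n) * ENNReal.ofReal (w₁ n) := by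
        rw [← ENNReal.ofReal_mul (hρ n).le]; congr 1; exact (hw n).symm
      calc ENNReal.ofReal (ρ n) * X₁ (f - g)
          ≤ ENNReal.ofReal (ρ n) * ((CK + 1) * (Ca * (J + ENNReal.ofReal (C2 * w₁ n) * κ * Cg))) :=
            mul_le_mul' le_rfl x1
        _ = (CK + 1) * Ca * (1 * (ENNReal.ofReal (ρ n) * J) +
              (ENNReal.ofReal C2 * Cg) * (ENNReal.ofReal (ω n) * κ)) := by
            rw [hωn, ENNReal.ofReal_mul hC2.le]; ring
        _ ≤ (CK + 1) * Ca * ((1 + ENNReal.ofReal C2 * Cg) * (ENNReal.ofReal (ρ n) * J) +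
              (1 + ENNReal.ofReal C2 * Cg) * (ENNReal.ofReal (ω n) * κ)) :=
            mul_le_mul' le_rfl (add_le_add (mul_le_mul' le_self_add le_rfl) (mul_le_mul' le_add_self le_rfl))
        _ = (CK + 1) * (Ca * (1 + ENNReal.ofReal C2 * Cg)) *
              (ENNReal.ofReal (ρ n) * J + ENNReal.ofReal (ω n) * κ) := by ring
        _ ≤ _ := mul_le_mul' (le_add_self.trans le_self_add) le_rfl
  have fin := lim_le (D := 2 * (M * ENNReal.ofReal (ω n))) (A := M * G + M * (ENNReal.ofReal (ρ n) * J))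
    (ENNReal.mul_ne_top (by simp) (ENNReal.mul_ne_top hMt (tR _))) hKn
    (fun κ hκ => (main κ hκ).trans (le_of_eq (by ring)))
  refine fin.trans ?_
  calc _ = M * (G + ENNReal.ofReal (ρ n) * J + 2 * (ENNReal.ofReal (ω n) * Kf A₀.N A₁.N (pw n) f)) := by ring
    _ ≤ M * (G + ENNReal.ofReal (ρ n) * J + 2 * (G + ENNReal.ofReal (ρ n) * J)) :=
        mul_le_mul' le_rfl (add_le_add le_rfl (mul_le_mul' le_rfl (hGn.trans le_self_add)))
    _ = _ := by ring

end QB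

lemma le_of_pw_le {s x M : ℝ} (hs : 0 < s) (hM : 0 < M) (h : pw (s * x) ≤ M) : x ≤ Real.logb 2 M / s := by
  rw [← pw_logb hM, pw_le_iff] at h
  rw [le_div_iff₀ hs]; linarith

lemma rho_gr {ρ V : ℤ → ℝ} (hV : SVs V) {δ : ℝ} (hδ : 0 < δ) (hρ : ∀ j : ℤ, ρ j = pw (j * δ) * V j) :
    ∃ C : ℝ, 1 ≤ C ∧ (∀ n j : ℤ, n ≤ j → ρ n * pw (δ / 2 * ((j:ℝ) - n)) ≤ C * ρ j) ∧
      (∀ n j : ℤ, ρ n ≤ C * pw ((δ + 1) * |(n:ℝ) - j|) * ρ j) := by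
  obtain ⟨C, hC, h⟩ := hV.2 (δ / 2) (by linarith)
  obtain ⟨C', hC', h'⟩ := hV.2 1 one_pos
  refine ⟨max 1 (max C C'), le_max_left _ _, fun n j hnj => ?_, fun n j => ?_⟩
  · have hnj' : (n:ℝ) ≤ j := by exact_mod_cast hnj
    have h1 := h n j
    rw [abs_of_nonpos (by linarith)] at h1
    have hVj := hV.1 j
    rw [hρ, hρ]
    calc pw (n * δ) * V n * pw (δ / 2 * ((j:ℝ) - n))
        ≤ pw (n * δ) * (C * pw (δ / 2 * (-((n:ℝ) - j))) * V j) * pw (δ / 2 * ((j:ℝ) - n)) :=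
          mul_le_mul_of_nonneg_right (mul_le_mul_of_nonneg_left h1 (pw_pos _).le) (pw_pos _).le
      _ = C * ((pw (n * δ) * pw (δ / 2 * (-((n:ℝ) - j))) * pw (δ / 2 * ((j:ℝ) - n))) * V j) := by ring
      _ = C * (pw (j * δ) * V j) := by
          rw [← pw_add, ← pw_add]; congr 3; ring
      _ ≤ _ := mul_le_mul_of_nonneg_right ((le_max_left _ _).trans (le_max_right _ _))
          (mul_pos (pw_pos _) hVj).le
  · have h1 := h' n j
    have hVj := hV.1 j
    rw [hρ, hρ]
    calc pw (n * δ) * V n ≤ pw (n * δ) * (C' * pw (1 * |(n:ℝ) - j|) * V j) :=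
          mul_le_mul_of_nonneg_left h1 (pw_pos _).le
      _ = C' * ((pw (n * δ) * pw (1 * |(n:ℝ) - j|)) * V j) := by ring
      _ ≤ C' * ((pw ((δ + 1) * |(n:ℝ) - j|) * pw (j * δ)) * V j) := by
          refine mul_le_mul_of_nonneg_left (mul_le_mul_of_nonneg_right ?_ hVj.le) hC'.le
          rw [← pw_add, ← pw_add]
          apply pw_mono
          nlinarith [le_abs_self ((n:ℝ) - j)]
      _ ≤ max 1 (max C C') * ((pw ((δ + 1) * |(n:ℝ) - j|) * pw (j * δ)) * V j) :=
          mul_le_mul_of_nonneg_right ((le_max_right _ _).trans (le_max_right _ _))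
            (mul_pos (mul_pos (pw_pos _) (pw_pos _)) hVj).le
      _ = _ := by ring

/-- change of variables -/
lemma chvar {ρ V : ℤ → ℝ} (hV : SVs V) {δ : ℝ} (hδ : 0 < δ) (hρ : ∀ j : ℤ, ρ j = pw (j * δ) * V j)
    {r : ℝ≥0∞} (hr : 0 < r) :
    ∃ R : ℝ, 1 ≤ R ∧ ∃ C : ℝ≥0∞, C ≠ ∞ ∧ ∀ (Φ : ℝ → ℝ≥0∞) (D : ℝ≥0∞),
      (∀ u v : ℝ, 0 < u → 0 < v → u ≤ R * v → v ≤ R * u → Φ u ≤ D * Φ v) →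
      lq r (fun k => Φ (pw k)) ≤ D * (C * lq r (fun n => Φ (ρ n))) ∧
      lq r (fun n => Φ (ρ n)) ≤ D * (C * lq r (fun k => Φ (pw k))) := by
  obtain ⟨C1, hC1, g1, g2⟩ := rho_gr hV hδ hρ
  have ρpos : ∀ j, 0 < ρ j := fun j => by rw [hρ]; exact mul_pos (pw_pos _) (hV.1 j)
  have C1pos : 0 < C1 := by linarith
  set C2 : ℝ := C1 * pw (δ + 1) with hC2
  have hp1 : 1 ≤ pw (δ + 1) := pw_zero.symm.le.trans (pw_mono (x := 0) (by linarith))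
  have hC2' : 1 ≤ C2 := by nlinarith
  have C2pos : 0 < C2 := by linarith
  have st : ∀ n : ℤ, ρ (n + 1) ≤ C2 * ρ n := fun n => by
    have := g2 (n + 1) n
    have e : |((n + 1 : ℤ) : ℝ) - n| = 1 := by push_cast; simp
    rwa [e, mul_one] at this
  set R := max 2 C2 with hR
  have hR1 : 1 ≤ R := le_trans (by norm_num) (le_max_left _ _)
  -- inner maps
  choose σ hσ using fun n => exists_Dy (ρpos n)
  have hσ2 : ∀ n, ρ n ≤ 2 * pw (σ n) := fun n => by
    have := (hσ n).2.le
    rw [pw_add, pw_one] at this; linarith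
  have hτ : ∀ k : ℤ, ∃ n : ℤ, ρ n ≤ pw k ∧ pw k ≤ C2 * ρ n := by
    intro k
    have Hb : ∃ b : ℤ, ∀ z : ℤ, ρ z ≤ pw k → z ≤ b := by
      refine ⟨max 0 ⌈Real.logb 2 (C1 * pw k / ρ 0) / (δ / 2)⌉, fun z hz => ?_⟩
      rcases le_total z 0 with h | h
      · exact h.trans (le_max_left _ _)
      · refine le_trans ?_ (le_max_right _ _)
        have := g1 0 z h
        rw [Int.cast_zero, sub_zero] at this
        have h2 : pw (δ / 2 * z) ≤ C1 * pw k / ρ 0 := by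
          rw [le_div_iff₀ (ρpos 0)]
          nlinarith
        have h3 := le_of_pw_le (by linarith) (div_pos (mul_pos C1pos (pw_pos _)) (ρpos 0)) h2
        exact_mod_cast h3.trans (Int.le_ceil _)
    have Hi : ∃ z : ℤ, ρ z ≤ pw k := by
      set m : ℕ := ⌈Real.logb 2 (C1 * ρ 0 / pw k) / (δ / 2)⌉₊ with hm
      refine ⟨-(m:ℤ), ?_⟩
      have := g1 (-(m:ℤ)) 0 (by simp)
      have hm' := Nat.le_ceil (Real.logb 2 (C1 * ρ 0 / pw k) / (δ / 2))
      rw [← hm, div_le_iff₀ (by linarith)] at hm'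
      have h4 := pw_mono hm'
      rw [pw_logb (div_pos (mul_pos C1pos (ρpos 0)) (pw_pos _)), div_le_iff₀ (pw_pos _)] at h4
      have e : δ / 2 * (((0:ℤ):ℝ) - ((-(m:ℤ) : ℤ) : ℝ)) = m * (δ / 2) := by push_cast; ring
      rw [e] at this
      have h5 := this.trans h4
      rw [mul_comm] at h5
      exact le_of_mul_le_mul_left h5 (pw_pos _)
    obtain ⟨n, hn, hn'⟩ := Int.exists_greatest_of_bdd (P := fun n => ρ n ≤ pw k) Hb Hi
    refine ⟨n, hn, ?_⟩
    by_contra hlt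
    push Not at hlt
    have := hn' (n + 1) ((st n).trans hlt.le)
    omega
  choose τ hτ1 hτ2 using hτ
  obtain ⟨Ca, hCa, ha⟩ := lq_comp_fib (q := r) ⌈Real.logb 2 (2 * C1) / (δ / 2)⌉₊
  obtain ⟨Cb, hCb, hb⟩ := lq_comp_fib (q := r) ⌈Real.logb 2 C2 / 1⌉₊
  refine ⟨R, hR1, Ca + Cb, ENNReal.add_ne_top.2 ⟨hCa, hCb⟩, fun Φ D h => ⟨?_, ?_⟩⟩
  · refine (lq_le_mul hr (y := fun k => Φ (ρ (τ k))) (c := D) fun k => ?_).trans ?_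
    · refine h _ _ (pw_pos _) (ρpos _) ((hτ2 k).trans ?_) ((hτ1 k).trans ?_)
      · exact mul_le_mul_of_nonneg_right (le_max_right _ _) (ρpos _).le
      · exact le_mul_of_one_le_left (pw_pos _).le hR1
    · refine mul_le_mul' le_rfl ((hb (fun n => Φ (ρ n)) τ ?_).trans (mul_le_mul' le_add_self le_rfl))
      have key : ∀ k l : ℤ, τ k = τ l → k - l ≤ (⌈Real.logb 2 C2 / 1⌉₊ : ℤ) := by
        intro k l e
        have h1 := hτ2 k
        rw [e] at h1
        have h2 : pw k ≤ C2 * pw l := h1.trans (mul_le_mul_of_nonneg_left (hτ1 l) C2pos.le)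
        have h3 : pw (1 * ((k:ℝ) - l)) ≤ C2 := by
          rw [one_mul, pw_sub, div_le_iff₀ (pw_pos _)]; exact h2
        have h4 := (le_of_pw_le one_pos C2pos h3).trans (Nat.le_ceil _)
        exact_mod_cast h4
      intro k l e
      rw [abs_le]
      have := key k l e
      have := key l k e.symm
      constructor <;> linarith
  · refine (lq_le_mul hr (y := fun n => Φ (pw (σ n))) (c := D) fun n => ?_).trans ?_
    · refine h _ _ (ρpos _) (pw_pos _) ((hσ2 n).trans ?_) ((hσ n).1.trans ?_)
      · exact mul_le_mul_of_nonneg_right (le_max_left _ _) (pw_pos _).le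
      · exact le_mul_of_one_le_left (ρpos _).le hR1
    · refine mul_le_mul' le_rfl ((ha (fun k => Φ (pw k)) σ ?_).trans (mul_le_mul' le_self_add le_rfl))
      have key : ∀ k l : ℤ, k ≤ l → σ k = σ l → l - k ≤ (⌈Real.logb 2 (2 * C1) / (δ / 2)⌉₊ : ℤ) := by
        intro k l hkl e
        have h1 := hσ2 l
        rw [← e] at h1
        have h2 : ρ l ≤ 2 * ρ k := h1.trans (mul_le_mul_of_nonneg_left (hσ k).1 (by norm_num))
        have h3 := g1 k l hkl
        have h5 : ρ k * pw (δ / 2 * ((l:ℝ) - k)) ≤ ρ k * (2 * C1) :=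
          h3.trans (by nlinarith)
        have h4 := (le_of_pw_le (by linarith) (by linarith) (le_of_mul_le_mul_left h5 (ρpos k))).trans (Nat.le_ceil _)
        exact_mod_cast h4
      intro k l e
      rcases le_total k l with hkl | hkl
      · rw [abs_of_nonpos (by linarith)]
        have := key k l hkl e
        linarith
      · rw [abs_of_nonneg (by linarith)]
        exact key l k hkl e.symm

lemma Phi_gr (E : Type*) [AddCommGroup E] {a : ℝ → ℝ} (ha : SlowlyVarying a) {θ : ℝ} (hθ : 0 ≤ θ) {R : ℝ} (hR : 1 ≤ R) :
    ∃ D : ℝ≥0∞, D ≠ ∞ ∧ ∀ (N₀ N₁ : E → ℝ≥0∞) (f : E) (u v : ℝ), 0 < u → 0 < v → u ≤ R * v → v ≤ R * u →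
      ENNReal.ofReal (u ^ (-θ) * a u) * Kf N₀ N₁ u f ≤
        D * (ENNReal.ofReal (v ^ (-θ) * a v) * Kf N₀ N₁ v f) := by
  obtain ⟨C, hC, h⟩ := SV_gr ha one_pos
  have hR0 : 0 < R := by linarith
  refine ⟨ENNReal.ofReal (R ^ θ * (C * R ^ (1:ℝ))) * ENNReal.ofReal R, ENNReal.mul_ne_top (by simp) (by simp), ?_⟩
  intro N₀ N₁ f u v hu hv h1 h2
  have e1 : u ^ (-θ) ≤ R ^ θ * v ^ (-θ) := by
    have : v ^ θ ≤ R ^ θ * u ^ θ := by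
      rw [← Real.mul_rpow hR0.le hu.le]
      exact Real.rpow_le_rpow hv.le h2 hθ
    rw [Real.rpow_neg hu.le, Real.rpow_neg hv.le, ← div_eq_mul_inv, le_div_iff₀ (Real.rpow_pos_of_pos hv _),
      inv_mul_le_iff₀ (Real.rpow_pos_of_pos hu _)]
    linarith
  have e2 := h u v R hu hv hR h1 h2
  have e3 : u ^ (-θ) * a u ≤ (R ^ θ * (C * R ^ (1:ℝ))) * (v ^ (-θ) * a v) := by
    refine (mul_le_mul e1 e2 (ha.2.1 u hu).le (by positivity)).trans (le_of_eq (by ring))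
  calc _ ≤ ENNReal.ofReal ((R ^ θ * (C * R ^ (1:ℝ))) * (v ^ (-θ) * a v)) * (ENNReal.ofReal R * Kf N₀ N₁ v f) :=
        mul_le_mul' (ENNReal.ofReal_le_ofReal e3) (Kf_scale _ _ hR h1 f)
    _ = _ := by
        rw [ENNReal.ofReal_mul (p := R ^ θ * (C * R ^ (1:ℝ))) (by positivity)]; ring

lemma SVs_comp {ρ V : ℤ → ℝ} (hV : SVs V) {δ : ℝ} (hδ : 0 < δ) (hρ : ∀ j : ℤ, ρ j = pw (j * δ) * V j)
    {a : ℝ → ℝ} (ha : SlowlyVarying a) : SVs (fun n => a (ρ n)) := by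
  obtain ⟨C1, hC1, g1, g2⟩ := rho_gr hV hδ hρ
  have ρpos : ∀ j, 0 < ρ j := fun j => by rw [hρ]; exact mul_pos (pw_pos _) (hV.1 j)
  refine ⟨fun n => ha.2.1 _ (ρpos n), fun ε hε => ?_⟩
  obtain ⟨C, hC, h⟩ := SV_gr ha (ε := ε / (δ + 1)) (by positivity)
  refine ⟨C * C1 ^ (ε / (δ + 1)), by positivity, fun j k => ?_⟩
  have hp : 1 ≤ pw ((δ + 1) * |(j:ℝ) - k|) := pw_zero.symm.le.trans (pw_mono (x := 0) (by positivity))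
  have h2 := g2 k j
  rw [abs_sub_comm] at h2
  have := h (ρ j) (ρ k) (C1 * pw ((δ + 1) * |(j:ℝ) - k|)) (ρpos _) (ρpos _) (by nlinarith) (g2 j k) h2
  refine this.trans (le_of_eq ?_)
  rw [Real.mul_rpow (by linarith) (pw_pos _).le, pw_rpow]
  have e : (δ + 1) * |(j:ℝ) - k| * (ε / (δ + 1)) = ε * |(j:ℝ) - k| := by
    field_simp
  rw [e]; ring

lemma RDC_comp {ρ : ℝ → ℝ} (hρ : RDC ρ) {a : ℝ → ℝ} (ha : SlowlyVarying a) : RDC (fun t => a (ρ t)) := by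
  obtain ⟨hp, C, hC, h⟩ := hρ
  obtain ⟨C', hC', h'⟩ := SV_gr ha one_pos
  refine ⟨fun u hu => ha.2.1 _ (hp u hu), C' * (max 1 C) ^ (1:ℝ), by positivity, fun k u hu => ?_⟩
  have hu0 := Dy_pos hu
  obtain ⟨a1, a2⟩ := h k u hu
  have p1 := hp u hu0
  have p2 := hp _ (pw_pos k)
  have b1 := a1.trans (mul_le_mul_of_nonneg_right (le_max_right 1 C) p2.le)
  have b2 := a2.trans (mul_le_mul_of_nonneg_right (le_max_right 1 C) p1.le)
  exact ⟨h' _ _ _ p1 p2 (le_max_left _ _) b1 b2, h' _ _ _ p2 p1 (le_max_left _ _) b2 b1⟩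

lemma om3 {a b c d e : ℝ} (ha : 0 ≤ a) (hc : 0 ≤ c) (hd : 0 ≤ d) (h : a * b ≤ c * d * e) (x : ℝ≥0∞) :
    ENNReal.ofReal a * (ENNReal.ofReal b * x) ≤
      ENNReal.ofReal c * (ENNReal.ofReal d * (ENNReal.ofReal e * x)) := by
  have := om h x
  rw [ENNReal.ofReal_mul ha, ENNReal.ofReal_mul (mul_nonneg hc hd), ENNReal.ofReal_mul hc] at this
  simpa only [mul_assoc] using this

section KK
variable {E : Type*} [AddCommGroup E]

lemma G_est {r : ℝ≥0∞} (hr : 0 < r) {u : ℤ → ℝ} (hu : SVs u) {κ ε : ℝ} (hε : 0 < ε) (h3 : 3 * ε ≤ κ) (N₀ N₁ : E → ℝ≥0∞)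
    {ω : ℤ → ℝ} (hω : ∀ j, 0 < ω j) :
    ∃ C : ℝ≥0∞, C ≠ ∞ ∧ ∀ f : E,
      lq r (fun n => ENNReal.ofReal (pw (-(n * κ)) * u n) * Gn N₀ N₁ ε ω n f) ≤
        C * lq r (fun j => ENNReal.ofReal (pw (-(j * κ)) * u j * ω j) * Kf N₀ N₁ (pw j) f) := by
  obtain ⟨C, hC, h⟩ := hu.2 ε hε
  obtain ⟨Ch, hCh, hh⟩ := lq_hardy hr hε
  refine ⟨ENNReal.ofReal C * Ch, ENNReal.mul_ne_top (by simp) hCh, fun f => ?_⟩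
  rw [mul_assoc]
  refine le_trans ?_ (mul_le_mul' le_rfl (hh _))
  refine lq_le_mul hr fun n => ?_
  unfold Gn
  rw [ENNReal.mul_iSup]
  refine iSup_le fun j => ?_
  by_cases hj : j ≤ n
  · refine le_trans ?_ (mul_le_mul' le_rfl (le_iSup _ j))
    have hj' : (j:ℝ) ≤ n := by exact_mod_cast hj
    simp only [indicator, mem_Iic, hj, if_true]
    have p0 := hω j
    have p1 := hu.1 j
    have p2 := hu.1 n
    have q := pw_pos
    refine om3 (mul_pos (q _) p2).le hC.le (q _).le ?_ _
    have h1 := h n j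
    rw [abs_of_nonneg (by linarith)] at h1 ⊢
    calc pw (-(n * κ)) * u n * (pw (ε * (n - j)) * ω j)
        ≤ pw (-(n * κ)) * (C * pw (ε * (n - j)) * u j) * (pw (ε * (n - j)) * ω j) :=
          mul_le_mul_of_nonneg_right (mul_le_mul_of_nonneg_left h1 (q _).le) (mul_pos (q _) p0).le
      _ = C * ((pw (-(n * κ)) * pw (ε * (n - j)) * pw (ε * (n - j))) * (u j * ω j)) := by ring
      _ ≤ C * ((pw (-(ε * (n - j))) * pw (-(j * κ))) * (u j * ω j)) := by
          refine mul_le_mul_of_nonneg_left (mul_le_mul_of_nonneg_right ?_ (mul_pos p1 p0).le) hC.le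
          rw [← pw_add, ← pw_add, ← pw_add]
          apply pw_mono
          nlinarith
      _ = _ := by ring
  · simp [indicator, hj]

lemma J_est {r r₁ : ℝ≥0∞} (hr : 0 < r) (hr₁ : 0 < r₁) {u : ℤ → ℝ} (hu : SVs u) {κ : ℝ} (hκ : 0 < κ) (N₀ N₁ : E → ℝ≥0∞)
    {w : ℤ → ℝ} (hw : ∀ j, 0 < w j) :
    ∃ C : ℝ≥0∞, C ≠ ∞ ∧ ∀ f : E,
      lq r (fun n => ENNReal.ofReal (pw (n * κ) * u n) * dJ N₀ N₁ r₁ w n f) ≤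
        C * lq r (fun j => ENNReal.ofReal (pw (j * κ) * u j * w j) * Kf N₀ N₁ (pw j) f) := by
  obtain ⟨ε, hε, h3⟩ : ∃ ε : ℝ, 0 < ε ∧ 3 * ε = κ := ⟨κ / 3, by linarith, by ring⟩
  obtain ⟨C, hC, h⟩ := hu.2 ε hε
  obtain ⟨Ch, hCh, hh⟩ := lq_hardy hr hε
  obtain ⟨Cs, hCs, hs⟩ := lq_le_sup hr₁ hε
  refine ⟨ENNReal.ofReal C * Cs * Ch, ENNReal.mul_ne_top (ENNReal.mul_ne_top (by simp) hCs) hCh, fun f => ?_⟩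
  rw [mul_assoc]
  refine le_trans ?_ (mul_le_mul' le_rfl (hh _))
  refine lq_le_mul hr fun n => ?_
  unfold dJ
  rw [← lq_const_mul hr₁, mul_assoc]
  refine le_trans ?_ (mul_le_mul' le_rfl (hs _ n))
  refine lq_le_mul hr₁ fun j => ?_
  by_cases hj : n ≤ j
  · have hj' : (n:ℝ) ≤ j := by exact_mod_cast hj
    simp only [indicator, mem_Ici, hj, if_true]
    have p0 := hw j
    have p1 := hu.1 j
    have p2 := hu.1 n
    have q := pw_pos
    refine om3 (mul_pos (q _) p2).le hC.le (q _).le ?_ _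
    have h1 := h n j
    rw [abs_of_nonpos (by linarith)] at h1 ⊢
    calc pw (n * κ) * u n * w j
        ≤ pw (n * κ) * (C * pw (ε * (-(n - j))) * u j) * w j :=
          mul_le_mul_of_nonneg_right (mul_le_mul_of_nonneg_left h1 (q _).le) p0.le
      _ = C * ((pw (n * κ) * pw (ε * (-(n - j)))) * (u j * w j)) := by ring
      _ ≤ C * ((pw (-(2 * ε * (-(n - j)))) * pw (j * κ)) * (u j * w j)) := by
          refine mul_le_mul_of_nonneg_left (mul_le_mul_of_nonneg_right ?_ (mul_pos p1 p0).le) hC.le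
          rw [← pw_add, ← pw_add]
          apply pw_mono
          nlinarith
      _ = _ := by ring
  · simp [indicator, hj]

end KK

/-- data extracted from the hypotheses -/
lemma setup {θ₀ θ₁ : ℝ} {r₀ : ℝ≥0∞} (hr₀ : 0 < r₀) {a₀ b₀ b₁ : ℝ → ℝ}
    (h_sv_a₀ : SlowlyVarying a₀) (h_sv_b₀ : SlowlyVarying b₀) (h_sv_b₁ : SlowlyVarying b₁)
    (hfin : LqNorm r₀ (Ioo 0 1) (svWgt r₀ (fun s => b₀ s / a₀ s)) ≠ ∞)
    {c₀ ρ : ℝ → ℝ}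
    (hc₀ : ∀ t, c₀ t = a₀ t * (LqNorm r₀ (Ioo 0 t) (svWgt r₀ (fun s => b₀ s / a₀ s))).toReal)
    (hρ : ∀ t, ρ t = t ^ (θ₁ - θ₀) * (c₀ t / b₁ t)) :
    RDC c₀ ∧ RDC ρ ∧ SVs (fun k => c₀ (pw k)) ∧ SVs (fun k => c₀ (pw k) / b₁ (pw k)) ∧
      ∀ j : ℤ, ρ (pw j) = pw (j * (θ₁ - θ₀)) * (c₀ (pw j) / b₁ (pw j)) := by
  have hd : RDC (fun s => b₀ s / a₀ s) := (SV_RDC h_sv_b₀).div (SV_RDC h_sv_a₀)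
  have hds : SVs (fun k => b₀ (pw k) / a₀ (pw k)) := (SV_SVs h_sv_b₀).div (SV_SVs h_sv_a₀)
  obtain ⟨B1, B2, -⟩ := B_prop hd hds hr₀ hfin
  have c1 : RDC c₀ := ((SV_RDC h_sv_a₀).mul B1).congr fun u _ => hc₀ u
  have c2 : SVs (fun k => c₀ (pw k)) := by
    have := (SV_SVs h_sv_a₀).mul B2
    refine (congrArg SVs (funext fun k => ?_)).mp this
    rw [hc₀]
  refine ⟨c1, ?_, c2, c2.div (SV_SVs h_sv_b₁), fun j => ?_⟩
  · exact ((RDC_id.rpow (θ₁ - θ₀)).mul (c1.div (SV_RDC h_sv_b₁))).congr fun u _ => hρ u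
  · rw [hρ, pw_rpow]

lemma core (A₀ A₁ : QuasiBanach E)
    (θ₀ θ₁ : ℝ) (hθ₀ : 0 < θ₀) (hθ₀₁ : θ₀ < θ₁) (hθ₁ : θ₁ < 1)
    (q₀ r r₁ r₀ : ℝ≥0∞) (hq₀ : 0 < q₀) (hr : 0 < r) (hr₁ : 0 < r₁) (hr₀ : 0 < r₀)
    (a a₀ b₀ b₁ : ℝ → ℝ)
    (h_sv_a : SlowlyVarying a)
    (h_sv_a₀ : SlowlyVarying a₀)
    (h_sv_b₀ : SlowlyVarying b₀)
    (h_sv_b₁ : SlowlyVarying b₁)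
    (hfin : LqNorm r₀ (Ioo 0 1) (svWgt r₀ (fun s => b₀ s / a₀ s)) ≠ ∞)
    (c₀ ρ : ℝ → ℝ)
    (hc₀ : ∀ t, c₀ t = a₀ t * (LqNorm r₀ (Ioo 0 t) (svWgt r₀ (fun s => b₀ s / a₀ s))).toReal)
    (hρ : ∀ t, ρ t = t ^ (θ₁ - θ₀) * (c₀ t / b₁ t)) (θ : ℝ) (hθ : 0 < θ) :
    ∃ C : ℝ≥0∞, C ≠ ∞ ∧ ∀ f : E,
      normK (normR A₀.N A₁.N θ₀ r₀ q₀ b₀ a₀) (normK A₀.N A₁.N θ₁ r₁ b₁) θ r a f ≤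
        C * lq r (fun n => ENNReal.ofReal (ρ (pw n) ^ (-θ) * a (ρ (pw n))) * (ENNReal.ofReal (ρ (pw n)) *
          dJ A₀.N A₁.N r₁ (fun k => pw (-(k * θ₁)) * b₁ (pw k)) n f)) ∧
      lq r (fun n => ENNReal.ofReal (ρ (pw n) ^ (-θ) * a (ρ (pw n))) * (ENNReal.ofReal (ρ (pw n)) *
          dJ A₀.N A₁.N r₁ (fun k => pw (-(k * θ₁)) * b₁ (pw k)) n f)) ≤
        C * normK (normR A₀.N A₁.N θ₀ r₀ q₀ b₀ a₀) (normK A₀.N A₁.N θ₁ r₁ b₁) θ r a f := by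
  have hδ : 0 < θ₁ - θ₀ := by linarith
  have hd : RDC (fun s => b₀ s / a₀ s) := (SV_RDC h_sv_b₀).div (SV_RDC h_sv_a₀)
  have hds : SVs (fun k => b₀ (pw k) / a₀ (pw k)) := (SV_SVs h_sv_b₀).div (SV_SVs h_sv_a₀)
  obtain ⟨-, B2, CB, hCB, hB⟩ := B_prop hd hds hr₀ hfin
  obtain ⟨-, -, c2, hV, hρj⟩ := setup hr₀ h_sv_a₀ h_sv_b₀ h_sv_b₁ hfin hc₀ hρ
  have sα := SV_SVs h_sv_a₀
  have sb := SV_SVs h_sv_b₁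
  set V : ℤ → ℝ := fun k => c₀ (pw k) / b₁ (pw k) with hVd
  set ρs : ℤ → ℝ := fun k => ρ (pw k) with hρs
  have ρpos : ∀ j, 0 < ρs j := fun j => by
    simp only [hρs, hρj]; exact mul_pos (pw_pos _) (hV.1 j)
  set Bs : ℤ → ℝ := fun k => (LqNorm r₀ (Ioo 0 (pw k)) (svWgt r₀ (fun s => b₀ s / a₀ s))).toReal with hBs
  set w₁ : ℤ → ℝ := fun k => pw (-(k * θ₁)) * b₁ (pw k) with hw₁
  set ω : ℤ → ℝ := fun j => pw (-(j * θ₀)) * (a₀ (pw j) * Bs j) with hω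
  have ωpos : ∀ j, 0 < ω j := fun j => mul_pos (pw_pos _) (mul_pos (sα.1 j) (B2.1 j))
  have w₁pos : ∀ j, 0 < w₁ j := fun j => mul_pos (pw_pos _) (sb.1 j)
  have hw : ∀ j : ℤ, ρs j * (pw (-(j * θ₁)) * b₁ (pw j)) = pw (-(j * θ₀)) * (a₀ (pw j) * Bs j) := by
    intro j
    simp only [hρs, hρj]
    have hb := (sb.1 j).ne'
    have : pw (-(j * θ₀)) = pw (j * (θ₁ - θ₀)) * pw (-(j * θ₁)) := by rw [← pw_add]; congr 1; ring
    rw [hc₀, this]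
    simp only [hBs]
    field_simp
  -- ε
  obtain ⟨ε, hε, e1, e2, e3, e4, e5⟩ : ∃ ε : ℝ, 0 < ε ∧ 2 * ε ≤ θ₀ ∧ 2 * ε ≤ 1 - θ₀ ∧ 2 * ε ≤ θ₁ ∧ 2 * ε ≤ 1 - θ₁ ∧
      3 * ε ≤ θ * (θ₁ - θ₀) := by
    have hk : 0 < θ * (θ₁ - θ₀) := mul_pos hθ hδ
    refine ⟨min (min (θ₀ / 2) ((1 - θ₁) / 2)) (θ * (θ₁ - θ₀) / 3),
      lt_min (lt_min (by linarith) (by linarith)) (by linarith), ?_⟩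
    have m1 := min_le_left (min (θ₀ / 2) ((1 - θ₁) / 2)) (θ * (θ₁ - θ₀) / 3)
    have m2 := min_le_right (min (θ₀ / 2) ((1 - θ₁) / 2)) (θ * (θ₁ - θ₀) / 3)
    have m3 := min_le_left (θ₀ / 2) ((1 - θ₁) / 2)
    have m4 := min_le_right (θ₀ / 2) ((1 - θ₁) / 2)
    refine ⟨?_, ?_, ?_, ?_, ?_⟩ <;> linarith
  obtain ⟨CU, hCU, HU⟩ := HD A₀ A₁ hr₀ hq₀ hr₁ (ρ := ρs) hCB sα hds B2 sb (fun k => (hB k).1) hε e1 e2 e3 e4 ρpos hw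
  obtain ⟨CL, hCL, HL⟩ := HC A₀ A₁ hr₀ hq₀ hr₁ (ρ := ρs) (w₀ := fun j => pw (-(j * θ₀)) * a₀ (pw j)) (w₁ := w₁)
    hCB (fun k => (hB k).2) hV hδ hρj B2.1 (fun j => by
      rw [eq_inv_mul_iff_mul_eq₀ (ρpos j).ne']
      refine (hw j).trans ?_
      ring)
  obtain ⟨CR, hCR, HR⟩ := normR_disc E h_sv_a₀ hd hr₀ hq₀ θ₀
  obtain ⟨CK, hCK, HK⟩ := normK_disc E (SV_RDC h_sv_b₁) hr₁ θ₁
  obtain ⟨CO, hCO, HO⟩ := normK_disc E (SV_RDC h_sv_a) hr θ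
  obtain ⟨R, hR, CF, hCF, HF⟩ := chvar hV hδ hρj hr
  obtain ⟨D, hD, HP⟩ := Phi_gr E h_sv_a hθ.le hR
  obtain ⟨Ca, hCa, hadd⟩ := lq_add hr
  have su : SVs (fun n => V n ^ (-θ) * a (ρs n)) := (hV.rpow (-θ)).mul (SVs_comp hV hδ hρj h_sv_a)
  obtain ⟨CG, hCG, HG⟩ := G_est hr su hε e5 A₀.N A₁.N ωpos
  set X₀ := normR A₀.N A₁.N θ₀ r₀ q₀ b₀ a₀ with hX₀
  set X₁ := normK A₀.N A₁.N θ₁ r₁ b₁ with hX₁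
  set Y₀ := dR A₀.N A₁.N r₀ q₀ (fun k => b₀ (pw k) / a₀ (pw k)) (fun k => pw (-(k * θ₀)) * a₀ (pw k)) with hY₀
  set Y₁ := dK A₀.N A₁.N r₁ w₁ with hY₁
  set Cx : ℝ≥0∞ := CR + CK + 1 with hCx
  have hCxt : Cx ≠ ∞ := by simp [hCx, hCR, hCK]
  have hCx0 : Cx ≠ 0 := by simp [hCx]
  have leR : CR ≤ Cx := le_self_add.trans le_self_add
  have leK : CK ≤ Cx := le_add_self.trans le_self_add
  have XY : ∀ t f, Kf X₀ X₁ t f ≤ Cx * Kf Y₀ Y₁ t f := fun t f =>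
    Kf_le_norms hCx0 hCxt (fun f => (HR A₀.N A₁.N f).1.trans (mul_le_mul' leR le_rfl))
      (fun f => (HK A₀.N A₁.N f).1.trans (mul_le_mul' leK le_rfl)) t f
  have YX : ∀ t f, Kf Y₀ Y₁ t f ≤ Cx * Kf X₀ X₁ t f := fun t f =>
    Kf_le_norms hCx0 hCxt (fun f => (HR A₀.N A₁.N f).2.trans (mul_le_mul' leR le_rfl))
      (fun f => (HK A₀.N A₁.N f).2.trans (mul_le_mul' leK le_rfl)) t f
  set T : ℤ → ℝ := fun n => ρs n ^ (-θ) * a (ρs n) with hT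
  have Tpos : ∀ n, 0 < T n := fun n => mul_pos (Real.rpow_pos_of_pos (ρpos n) _) (h_sv_a.2.1 _ (ρpos n))
  have hTu : ∀ n : ℤ, pw (-(n * (θ * (θ₁ - θ₀)))) * (V n ^ (-θ) * a (ρs n)) = T n := by
    intro n
    have : ρs n ^ (-θ) = pw (-(n * (θ * (θ₁ - θ₀)))) * V n ^ (-θ) := by
      simp only [hρs, hρj]
      rw [Real.mul_rpow (pw_pos _).le (hV.1 n).le, pw_rpow]
      congr 2; ring
    simp only [hT, this]; ring
  simp only [hTu] at HG
  have dKe : ∀ f, dK X₀ X₁ r (fun k => pw (-(k * θ)) * a (pw k)) f =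
      lq r (fun k => (fun v => ENNReal.ofReal (v ^ (-θ) * a v) * Kf X₀ X₁ v f) (pw k)) := by
    intro f
    unfold dK
    congr 1; funext k
    simp only [pw_rpow, mul_neg]
  refine ⟨CO * (D * (CF * (Cx * CU * (Ca * (CG + 1))))) + CL * Cx * (D * CF * CO), ?_, fun f => ⟨?_, ?_⟩⟩
  · have : CG + 1 ≠ ∞ := ENNReal.add_ne_top.2 ⟨hCG, by simp⟩
    refine ENNReal.add_ne_top.2 ⟨?_, ?_⟩ <;> apply_rules [ENNReal.mul_ne_top]
  · set Q := lq r (fun n => ENNReal.ofReal (ρ (pw n) ^ (-θ) * a (ρ (pw n))) * (ENNReal.ofReal (ρ (pw n)) *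
          dJ A₀.N A₁.N r₁ w₁ n f)) with hQ
    have zQ : lq r (fun j => ENNReal.ofReal (T j * ω j) * Kf A₀.N A₁.N (pw j) f) ≤ Q := by
      refine lq_mono r fun j => ?_
      have hωj : ω j = ρs j * w₁ j := (hw j).symm
      rw [hωj, ENNReal.ofReal_mul (Tpos j).le, ENNReal.ofReal_mul (ρpos j).le, mul_assoc, mul_assoc]
      refine mul_le_mul' le_rfl (mul_le_mul' le_rfl ?_)
      refine le_trans (le_of_eq ?_) (le_lq hr₁ _ j)
      simp [indicator]
    have step : lq r (fun n => ENNReal.ofReal (T n) * Kf X₀ X₁ (ρs n) f) ≤ Cx * CU * (Ca * (CG + 1)) * Q := by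
      refine (lq_le_mul hr (c := Cx * CU) (y := fun n => ENNReal.ofReal (T n) * Gn A₀.N A₁.N ε ω n f +
        ENNReal.ofReal (T n) * (ENNReal.ofReal (ρs n) * dJ A₀.N A₁.N r₁ w₁ n f)) fun n => ?_).trans ?_
      · refine (mul_le_mul' le_rfl ((XY _ _).trans (mul_le_mul' le_rfl (HU n f)))).trans (le_of_eq ?_)
        ring
      · rw [mul_assoc (Cx * CU) (Ca * (CG + 1)) Q]
        refine mul_le_mul' le_rfl ((hadd _ _).trans ?_)
        rw [mul_assoc]
        refine mul_le_mul' le_rfl ?_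
        rw [add_mul, one_mul]
        exact add_le_add ((HG f).trans (mul_le_mul' le_rfl zQ)) le_rfl
    refine (HO X₀ X₁ f).1.trans ?_
    rw [dKe]
    refine (mul_le_mul' le_rfl (HF _ D (HP X₀ X₁ f)).1).trans ?_
    refine (mul_le_mul' le_rfl (mul_le_mul' le_rfl (mul_le_mul' le_rfl step))).trans ?_
    refine le_trans (le_of_eq ?_) (mul_le_mul' le_self_add le_rfl)
    ring
  · refine (lq_le_mul hr (c := CL * Cx) (y := fun n => ENNReal.ofReal (T n) * Kf X₀ X₁ (ρs n) f) fun n => ?_).trans ?_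
    · refine (mul_le_mul' le_rfl ((HL n f).trans (mul_le_mul' le_rfl (YX _ _)))).trans (le_of_eq ?_)
      ring
    · have h1 := (HF _ D (HP X₀ X₁ f)).2
      have h2 := (HO X₀ X₁ f).2
      rw [dKe] at h2
      refine (mul_le_mul' le_rfl (h1.trans (mul_le_mul' le_rfl (mul_le_mul' le_rfl h2)))).trans ?_
      refine le_trans (le_of_eq ?_) (mul_le_mul' le_add_self le_rfl)
      ring

lemma equiv_of {nX nY : E → ℝ≥0∞} {Q : E → ℝ≥0∞} {C D : ℝ≥0∞} (hC : C ≠ ∞) (hD : D ≠ ∞)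
    (h : ∀ f, nX f ≤ C * Q f ∧ Q f ≤ C * nX f) (h' : ∀ f, nY f ≤ D * Q f ∧ Q f ≤ D * nY f) :
    EquivNorms nX nY := by
  have ht : C * D + 1 ≠ ∞ := ENNReal.add_ne_top.2 ⟨ENNReal.mul_ne_top hC hD, by simp⟩
  refine ⟨C * D + 1, by simp, ht, fun f => ⟨?_, ?_⟩⟩
  · rw [ENNReal.inv_mul_le_iff (by simp) ht]
    refine (h' f).1.trans ((mul_le_mul' le_rfl (h f).2).trans ?_)
    rw [← mul_assoc, mul_comm D]
    exact mul_le_mul' le_self_add le_rfl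
  · refine (h f).1.trans ((mul_le_mul' le_rfl (h' f).2).trans ?_)
    rw [← mul_assoc]
    exact mul_le_mul' le_self_add le_rfl

theorem theorem24
    (A₀ A₁ : QuasiBanach E)
    (hne : ∃ x : E, x ≠ 0 ∧ A₀.N x ≠ ∞ ∧ A₁.N x ≠ ∞)
    (θ₀ θ₁ : ℝ) (hθ₀ : 0 < θ₀) (hθ₀₁ : θ₀ < θ₁) (hθ₁ : θ₁ < 1)
    (q₀ r r₁ r₀ : ℝ≥0∞) (hq₀ : 0 < q₀) (hr : 0 < r) (hr₁ : 0 < r₁) (hr₀ : 0 < r₀)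
    (a a₀ b₀ b₁ : ℝ → ℝ)
    (h_sv_a : SlowlyVarying a)
    (h_sv_a₀ : SlowlyVarying a₀)
    (h_sv_b₀ : SlowlyVarying b₀)
    (h_sv_b₁ : SlowlyVarying b₁)
    (hfin : LqNorm r₀ (Ioo 0 1) (svWgt r₀ (fun s => b₀ s / a₀ s)) ≠ ∞)
    (c₀ ρ : ℝ → ℝ)
    (hc₀ : ∀ t, c₀ t = a₀ t * (LqNorm r₀ (Ioo 0 t) (svWgt r₀ (fun s => b₀ s / a₀ s))).toReal)
    (hρ : ∀ t, ρ t = t ^ (θ₁ - θ₀) * (c₀ t / b₁ t)) :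
    (∀ θ : ℝ, 0 < θ → θ < 1 →
      EquivNorms
        (normK (normR A₀.N A₁.N θ₀ r₀ q₀ b₀ a₀) (normK A₀.N A₁.N θ₁ r₁ b₁) θ r a)
        (normK A₀.N A₁.N ((1 - θ) * θ₀ + θ * θ₁) r
          (fun t => c₀ t ^ (1 - θ) * b₁ t ^ θ * a (ρ t)))) ∧
    (LqNorm r (Ioo 0 1) (svWgt r (fun s => a s)) ≠ ∞ →
      EquivNorms
        (normK (normR A₀.N A₁.N θ₀ r₀ q₀ b₀ a₀) (normK A₀.N A₁.N θ₁ r₁ b₁) 1 r a)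
        (normR A₀.N A₁.N θ₁ r r₁ (fun t => b₁ t * a (ρ t)) b₁)) := by
  obtain ⟨Rc, Rρ, c2, hV, hρj⟩ := setup hr₀ h_sv_a₀ h_sv_b₀ h_sv_b₁ hfin hc₀ hρ
  have Ra : RDC (fun t => a (ρ t)) := RDC_comp Rρ h_sv_a
  have hδ : 0 < θ₁ - θ₀ := by linarith
  have sb := SV_SVs h_sv_b₁
  have ρpos : ∀ j : ℤ, 0 < ρ (pw j) := fun j => Rρ.1 _ (pw_pos _)
  have apos : ∀ j : ℤ, 0 < a (ρ (pw j)) := fun j => Ra.1 _ (pw_pos _)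
  refine ⟨fun θ hθ hθ1 => ?_, fun _ => ?_⟩
  · obtain ⟨C, hC, h⟩ := core A₀ A₁ θ₀ θ₁ hθ₀ hθ₀₁ hθ₁ q₀ r r₁ r₀ hq₀ hr hr₁ hr₀ a a₀ b₀ b₁ h_sv_a h_sv_a₀
      h_sv_b₀ h_sv_b₁ hfin c₀ ρ hc₀ hρ θ hθ
    have RA : RDC (fun t => c₀ t ^ (1 - θ) * b₁ t ^ θ * a (ρ t)) :=
      ((Rc.rpow (1 - θ)).mul ((SV_RDC h_sv_b₁).rpow θ)).mul Ra
    obtain ⟨CY, hCY, hY⟩ := normK_disc E RA hr ((1 - θ) * θ₀ + θ * θ₁)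
    have su : SVs (fun n : ℤ => (c₀ (pw n) / b₁ (pw n)) ^ (1 - θ) * a (ρ (pw n))) :=
      (hV.rpow (1 - θ)).mul (SVs_comp hV hδ hρj h_sv_a)
    have w₁pos : ∀ j : ℤ, 0 < pw (-(j * θ₁)) * b₁ (pw j) := fun j => mul_pos (pw_pos _) (sb.1 j)
    obtain ⟨CJ, hCJ, hJ⟩ := J_est hr hr₁ su (κ := (1 - θ) * (θ₁ - θ₀)) (mul_pos (by linarith) hδ) A₀.N A₁.N w₁pos
    have eT : ∀ n : ℤ, pw (n * ((1 - θ) * (θ₁ - θ₀))) * ((c₀ (pw n) / b₁ (pw n)) ^ (1 - θ) * a (ρ (pw n))) =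
        ρ (pw n) ^ (-θ) * a (ρ (pw n)) * ρ (pw n) := by
      intro n
      have e1 : ρ (pw n) ^ (-θ) * ρ (pw n) = ρ (pw n) ^ (1 - θ) := by
        rw [← Real.rpow_add_one (ρpos n).ne']; congr 1; ring
      have e2 : ρ (pw n) ^ (1 - θ) = pw (n * ((1 - θ) * (θ₁ - θ₀))) * (c₀ (pw n) / b₁ (pw n)) ^ (1 - θ) := by
        rw [hρj, Real.mul_rpow (pw_pos _).le (hV.1 n).le, pw_rpow]
        congr 2; ring
      calc _ = (pw (n * ((1 - θ) * (θ₁ - θ₀))) * (c₀ (pw n) / b₁ (pw n)) ^ (1 - θ)) * a (ρ (pw n)) := by ring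
        _ = (ρ (pw n) ^ (-θ) * ρ (pw n)) * a (ρ (pw n)) := by rw [← e2, e1]
        _ = _ := by ring
    have eZ : ∀ n : ℤ, pw (n * ((1 - θ) * (θ₁ - θ₀))) * ((c₀ (pw n) / b₁ (pw n)) ^ (1 - θ) * a (ρ (pw n))) *
        (pw (-(n * θ₁)) * b₁ (pw n)) =
        pw (-(n * ((1 - θ) * θ₀ + θ * θ₁))) * (c₀ (pw n) ^ (1 - θ) * b₁ (pw n) ^ θ * a (ρ (pw n))) := by
      intro n
      have e1 : pw (-(n * ((1 - θ) * θ₀ + θ * θ₁))) = pw (n * ((1 - θ) * (θ₁ - θ₀))) * pw (-(n * θ₁)) := by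
        rw [← pw_add]; congr 1; ring
      have hb := sb.1 n
      have hbp := Real.rpow_pos_of_pos hb (1 - θ)
      have e2 : b₁ (pw n) = b₁ (pw n) ^ (1 - θ) * b₁ (pw n) ^ θ := by
        rw [← Real.rpow_add hb]; simp
      have e3 : (c₀ (pw n) / b₁ (pw n)) ^ (1 - θ) * b₁ (pw n) = c₀ (pw n) ^ (1 - θ) * b₁ (pw n) ^ θ := by
        rw [Real.div_rpow (c2.1 n).le hb.le]
        calc c₀ (pw n) ^ (1 - θ) / b₁ (pw n) ^ (1 - θ) * b₁ (pw n)
            = c₀ (pw n) ^ (1 - θ) / b₁ (pw n) ^ (1 - θ) * (b₁ (pw n) ^ (1 - θ) * b₁ (pw n) ^ θ) := by rw [← e2]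
          _ = (b₁ (pw n) ^ (1 - θ) / b₁ (pw n) ^ (1 - θ)) * (c₀ (pw n) ^ (1 - θ) * b₁ (pw n) ^ θ) := by ring
          _ = _ := by rw [div_self hbp.ne', one_mul]
      rw [e1, ← e3]; ring
    refine equiv_of hC (D := CY * (CJ + 1)) (ENNReal.mul_ne_top hCY (ENNReal.add_ne_top.2 ⟨hCJ, by simp⟩)) h fun f => ⟨?_, ?_⟩
    · refine (hY A₀.N A₁.N f).1.trans ?_
      rw [mul_assoc]
      refine mul_le_mul' le_rfl (le_trans ?_ (le_mul_of_one_le_left' le_add_self))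
      refine lq_mono r fun n => ?_
      beta_reduce
      rw [← eZ n, eT n, ENNReal.ofReal_mul (mul_pos (mul_pos (Real.rpow_pos_of_pos (ρpos n) _) (apos n)) (ρpos n)).le,
        ENNReal.ofReal_mul (mul_pos (Real.rpow_pos_of_pos (ρpos n) _) (apos n)).le, mul_assoc, mul_assoc]
      refine mul_le_mul' le_rfl (mul_le_mul' le_rfl ?_)
      refine le_trans (le_of_eq ?_) (le_lq hr₁ _ n)
      simp [indicator]
    · have h1 := hJ f
      simp only [eZ] at h1
      simp only [eT] at h1
      have h2 := (hY A₀.N A₁.N f).2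
      calc _ ≤ CJ * (CY * normK A₀.N A₁.N ((1 - θ) * θ₀ + θ * θ₁) r
            (fun t => c₀ t ^ (1 - θ) * b₁ t ^ θ * a (ρ t)) f) := by
            refine le_trans (le_of_eq ?_) (h1.trans (mul_le_mul' le_rfl h2))
            congr 1; funext n
            rw [ENNReal.ofReal_mul (mul_pos (Real.rpow_pos_of_pos (ρpos n) _) (apos n)).le, mul_assoc]
        _ = CY * CJ * normK A₀.N A₁.N ((1 - θ) * θ₀ + θ * θ₁) r
            (fun t => c₀ t ^ (1 - θ) * b₁ t ^ θ * a (ρ t)) f := by ring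
        _ ≤ _ := mul_le_mul' (mul_le_mul' le_rfl le_self_add) le_rfl
  · obtain ⟨C, hC, h⟩ := core A₀ A₁ θ₀ θ₁ hθ₀ hθ₀₁ hθ₁ q₀ r r₁ r₀ hq₀ hr hr₁ hr₀ a a₀ b₀ b₁ h_sv_a h_sv_a₀
      h_sv_b₀ h_sv_b₁ hfin c₀ ρ hc₀ hρ 1 one_pos
    have bpos : ∀ t, 0 < t → 0 < b₁ t := fun t ht => h_sv_b₁.2.1 t ht
    have RB : RDC (fun t => (fun t => b₁ t * a (ρ t)) t / b₁ t) := Ra.congr fun u hu => by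
      have := (bpos u hu).ne'
      field_simp
    obtain ⟨CY, hCY, hY⟩ := normR_disc E h_sv_b₁ RB hr hr₁ θ₁
    refine equiv_of hC hCY h fun f => ?_
    have e : lq r (fun n : ℤ => ENNReal.ofReal (ρ (pw n) ^ (-(1:ℝ)) * a (ρ (pw n))) * (ENNReal.ofReal (ρ (pw n)) *
          dJ A₀.N A₁.N r₁ (fun k => pw (-(k * θ₁)) * b₁ (pw k)) n f)) =
        dR A₀.N A₁.N r r₁ (fun k => (fun t => b₁ t * a (ρ t)) (pw k) / b₁ (pw k))
          (fun k => pw (-(k * θ₁)) * b₁ (pw k)) f := by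
      unfold dR
      congr 1; funext n
      rw [← mul_assoc, ← ENNReal.ofReal_mul (mul_pos (Real.rpow_pos_of_pos (ρpos n) _) (apos n)).le]
      congr 2
      have h1 := (ρpos n).ne'
      have h2 := (sb.1 n).ne'
      rw [Real.rpow_neg_one]
      field_simp
    rw [e]
    exact hY A₀.N A₁.N f

end
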